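/- Let φ : ℕ → ℕ be an injective computable function. For M ≥ 4 let K_M = ∫₀^∞ g_M(α) ln α dα, define g*(α) = Σ_{M=4}^∞ 2^(−φ(M)) · g_M(α)/K_M, let c₂ = ∫₀^∞ g*(α) dα, and define f*(α) = g*(|α|)/(2c₂). Then for all computable reals P > 0 and σ² > 0, the real number x* = ∫_ℝ log₂(1 + σ²/(P·α²)) f*(α) dα (the integrand interpreted as 0 where f* vanishes, in particular on [−1,1]) is a computable real number. -/

import Mathlib

open Filter MeasureTheory

/-- A real number `x` is computable if there is a computable sequence of rationals
approximating it to precision `2^(-n)`. -/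
def IsComputableReal (x : ℝ) : Prop :=
  ∃ q : ℕ → ℚ, Computable q ∧ ∀ n : ℕ, |x - (q n : ℝ)| ≤ 2 ^ (-(n : ℤ))

/-- For `M ≥ 4`, the function `g_M` from Lemma 1 of the paper. -/
noncomputable def gM (M : ℕ) (α : ℝ) : ℝ :=
  if α ≤ 2 then 0
  else if α ≤ 3 then (α - 2) / (3 * (Real.log 3) ^ 2)
  else if α ≤ M then 1 / (α * (Real.log α) ^ 2)
  else if α ≤ M + 1 then ((M : ℝ) + 1 - α) / (M * (Real.log M) ^ 2)
  else 0

/-- `K_M = ∫₀^∞ g_M(α) ln α dα`. -/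
noncomputable def Kconst (M : ℕ) : ℝ :=
  ∫ α in Set.Ioi (0 : ℝ), gM M α * Real.log α

section CompBasics

lemma cs_search {ι : Type} [Primcodable ι] {p : ι → ℕ → Bool} (hp : Computable₂ p)
    (h : ∀ i, ∃ n, p i n = true) :
    ∃ s : ι → ℕ, Computable s ∧ ∀ i, p i (s i) = true := by
  classical
  refine ⟨fun i => Nat.find (h i), ?_, fun i => Nat.find_spec (h i)⟩
  have := Partrec.rfind (p := fun i n => Part.some (p i n)) hp.partrec₂
  refine Partrec.of_eq this fun i => ?_
  have : Nat.find (h i) ∈ Nat.rfind fun n => Part.some (p i n) := by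
    refine Nat.mem_rfind.2 ⟨?_, fun {m} hm => ?_⟩
    · simpa using! (Nat.find_spec (h i))
    · have := Nat.find_min (h i) hm
      simpa using! this
  exact Part.eq_some_iff.2 this

/-- `r` is given by a computable sequence of nonnegative fractions. -/
def CQ {ι : Type} [Primcodable ι] (r : ι → ℝ) : Prop :=
  ∃ a b : ι → ℕ, Computable a ∧ Computable b ∧ ∀ i, r i = (a i : ℝ) / ((b i : ℝ) + 1)

variable {ι κ : Type} [Primcodable ι] [Primcodable κ]

lemma cadd {f g : ι → ℕ} (hf : Computable f) (hg : Computable g) :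
    Computable fun i => f i + g i := Primrec.nat_add.to_comp.comp hf hg
lemma cmul {f g : ι → ℕ} (hf : Computable f) (hg : Computable g) :
    Computable fun i => f i * g i := Primrec.nat_mul.to_comp.comp hf hg
lemma csub {f g : ι → ℕ} (hf : Computable f) (hg : Computable g) :
    Computable fun i => f i - g i := Primrec.nat_sub.to_comp.comp hf hg
lemma cmax {f g : ι → ℕ} (hf : Computable f) (hg : Computable g) :
    Computable fun i => max (f i) (g i) := Primrec.nat_max.to_comp.comp hf hg
lemma cle {f g : ι → ℕ} (hf : Computable f) (hg : Computable g) :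
    Computable fun i => decide (f i ≤ g i) := by
  obtain ⟨h, h'⟩ := Primrec.nat_le
  have := (Primrec.to_comp h').comp (hf.pair hg)
  refine this.of_eq fun i => ?_
  simp

lemma cpow {f : ι → ℕ} (hf : Computable f) : Computable fun i => 2 ^ f i := by
  have h := Computable.nat_rec (f := f) (g := fun _ => 1) (h := fun _ x => 2 * x.2) hf
    (Computable.const 1)
    (cmul (ι := ι × ℕ × ℕ) (Computable.const 2) (Computable.snd.comp Computable.snd))
  refine h.of_eq fun i => ?_
  induction f i with
  | zero => rfl
  | succ n ih => simp only [ih, pow_succ]; ring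

lemma CQ.nonneg {r : ι → ℝ} (h : CQ r) (i : ι) : 0 ≤ r i := by
  obtain ⟨a, b, -, -, h⟩ := h
  rw [h]; positivity

lemma CQ.comp {r : ι → ℝ} (h : CQ r) {f : κ → ι} (hf : Computable f) : CQ fun i => r (f i) := by
  obtain ⟨a, b, ha, hb, h⟩ := h
  exact ⟨_, _, ha.comp hf, hb.comp hf, fun i => h _⟩

lemma CQ.congr {r s : ι → ℝ} (h : CQ r) (e : ∀ i, r i = s i) : CQ s := by
  obtain rfl : r = s := funext e
  exact h

lemma CQ.nat {f : ι → ℕ} (hf : Computable f) : CQ fun i => (f i : ℝ) :=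
  ⟨f, fun _ => 0, hf, Computable.const 0, fun i => by simp⟩

lemma CQ.add {r s : ι → ℝ} (hr : CQ r) (hs : CQ s) : CQ fun i => r i + s i := by
  obtain ⟨a, b, ha, hb, h⟩ := hr
  obtain ⟨c, d, hc, hd, h'⟩ := hs
  refine ⟨fun i => a i * (d i + 1) + c i * (b i + 1), fun i => b i * d i + b i + d i,
    cadd (cmul ha (cadd hd (.const 1))) (cmul hc (cadd hb (.const 1))),
    cadd (cadd (cmul hb hd) hb) hd, fun i => ?_⟩
  dsimp only
  rw [h, h']
  have h1 : (b i : ℝ) + 1 ≠ 0 := by positivity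
  have h2 : (d i : ℝ) + 1 ≠ 0 := by positivity
  have h3 : ((b i * d i + b i + d i : ℕ) : ℝ) + 1 = (b i + 1) * (d i + 1) := by push_cast; ring
  rw [h3]; push_cast; field_simp

lemma CQ.mul {r s : ι → ℝ} (hr : CQ r) (hs : CQ s) : CQ fun i => r i * s i := by
  obtain ⟨a, b, ha, hb, h⟩ := hr
  obtain ⟨c, d, hc, hd, h'⟩ := hs
  refine ⟨fun i => a i * c i, fun i => b i * d i + b i + d i,
    cmul ha hc,
    cadd (cadd (cmul hb hd) hb) hd, fun i => ?_⟩
  dsimp only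
  rw [h, h']
  have h3 : ((b i * d i + b i + d i : ℕ) : ℝ) + 1 = (b i + 1) * (d i + 1) := by push_cast; ring
  rw [h3]; push_cast; field_simp

lemma CQ.max {r s : ι → ℝ} (hr : CQ r) (hs : CQ s) : CQ fun i => Max.max (r i) (s i) := by
  obtain ⟨a, b, ha, hb, h⟩ := hr
  obtain ⟨c, d, hc, hd, h'⟩ := hs
  refine ⟨fun i => Max.max (a i * (d i + 1)) (c i * (b i + 1)), fun i => b i * d i + b i + d i,
    cmax (cmul ha (cadd hd (.const 1))) (cmul hc (cadd hb (.const 1))),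
    cadd (cadd (cmul hb hd) hb) hd, fun i => ?_⟩
  dsimp only
  rw [h, h']
  have h1 : 0 < (b i : ℝ) + 1 := by positivity
  have h2 : 0 < (d i : ℝ) + 1 := by positivity
  have h3 : ((b i * d i + b i + d i : ℕ) : ℝ) + 1 = (b i + 1) * (d i + 1) := by push_cast; ring
  rw [h3, Nat.cast_max, ← max_div_div_right (by positivity)]
  push_cast
  congr 1 <;> field_simp

lemma CQ.tsub {r s : ι → ℝ} (hr : CQ r) (hs : CQ s) : CQ fun i => Max.max (r i - s i) 0 := by
  obtain ⟨a, b, ha, hb, h⟩ := hr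
  obtain ⟨c, d, hc, hd, h'⟩ := hs
  refine ⟨fun i => (a i * (d i + 1)) - (c i * (b i + 1)), fun i => b i * d i + b i + d i,
    csub (cmul ha (cadd hd (.const 1))) (cmul hc (cadd hb (.const 1))),
    cadd (cadd (cmul hb hd) hb) hd, fun i => ?_⟩
  dsimp only
  rw [h, h']
  have h1 : 0 < (b i : ℝ) + 1 := by positivity
  have h2 : 0 < (d i : ℝ) + 1 := by positivity
  have h3 : ((b i * d i + b i + d i : ℕ) : ℝ) + 1 = (b i + 1) * (d i + 1) := by push_cast; ring
  have h4 : (((a i * (d i + 1)) - (c i * (b i + 1)) : ℕ) : ℝ)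
      = Max.max ((a i * (d i + 1) : ℝ) - (c i * (b i + 1))) 0 := by
    rcases le_total (c i * (b i + 1)) (a i * (d i + 1)) with hh | hh
    · rw [Nat.cast_sub hh, max_eq_left]
      · push_cast; ring
      · have : ((c i * (b i + 1) : ℕ) : ℝ) ≤ ((a i * (d i + 1) : ℕ) : ℝ) := by exact_mod_cast hh
        push_cast at this; linarith
    · rw [Nat.sub_eq_zero_of_le hh, max_eq_right]
      · simp
      · have : ((a i * (d i + 1) : ℕ) : ℝ) ≤ ((c i * (b i + 1) : ℕ) : ℝ) := by exact_mod_cast hh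
        push_cast at this; linarith
  rw [h3, h4, ← max_div_div_right (by positivity)]
  congr 1
  · field_simp
  · simp

lemma CQ.inv {r : ι → ℝ} (hr : CQ r) : CQ fun i => (r i)⁻¹ := by
  obtain ⟨a, b, ha, hb, h⟩ := hr
  refine ⟨fun i => (1 - (1 - a i)) * (b i + 1), fun i => a i - 1,
    cmul (csub (.const 1) (csub (.const 1) ha)) (cadd hb (.const 1)), csub ha (.const 1),
    fun i => ?_⟩
  dsimp only
  rw [h]
  rcases Nat.eq_zero_or_pos (a i) with h0 | h0
  · simp [h0]
  · have : 1 - (1 - a i) = 1 := by omega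
    rw [this, Nat.cast_sub h0]; simp

lemma CQ.le {r s : ι → ℝ} (hr : CQ r) (hs : CQ s) :
    ∃ p : ι → Bool, Computable p ∧ ∀ i, p i = true ↔ r i ≤ s i := by
  obtain ⟨a, b, ha, hb, h⟩ := hr
  obtain ⟨c, d, hc, hd, h'⟩ := hs
  refine ⟨_, cle (cmul ha (cadd hd (.const 1))) (cmul hc (cadd hb (.const 1))), fun i => ?_⟩
  rw [h, h', decide_eq_true_iff, div_le_div_iff₀ (by positivity) (by positivity)]
  norm_cast

lemma CQ.sum {r : ι × ℕ → ℝ} (hr : CQ r) {n : ι → ℕ} (hn : Computable n) :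
    CQ fun i => ∑ j ∈ Finset.range (n i), r (i, j) := by
  obtain ⟨a, b, ha, hb, h⟩ := hr
  let st : ι → ℕ × (ℕ × ℕ) → ℕ × ℕ := fun i x =>
    (x.2.1 * (b (i, x.1) + 1) + a (i, x.1) * (x.2.2 + 1),
      x.2.2 * b (i, x.1) + x.2.2 + b (i, x.1))
  have hst : Computable₂ st := by
    have e1 : Computable fun x : ι × (ℕ × (ℕ × ℕ)) => (x.1, x.2.1) :=
      Computable.fst.pair (Computable.fst.comp .snd)
    have e2 : Computable fun x : ι × (ℕ × (ℕ × ℕ)) => x.2.2.1 :=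
      Computable.fst.comp (Computable.snd.comp .snd)
    have e3 : Computable fun x : ι × (ℕ × (ℕ × ℕ)) => x.2.2.2 :=
      Computable.snd.comp (Computable.snd.comp .snd)
    exact Computable.pair (cadd (cmul e2 (cadd (hb.comp e1) (.const 1)))
      (cmul (ha.comp e1) (cadd e3 (.const 1))))
      (cadd (cadd (cmul e3 (hb.comp e1)) e3) (hb.comp e1))
  have H := Computable.nat_rec (f := n) (g := fun _ => ((0 : ℕ), (0 : ℕ))) (h := st) hn
    (Computable.const _) hst
  refine ⟨_, _, Computable.fst.comp H, Computable.snd.comp H, fun i => ?_⟩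
  dsimp only
  induction n i with
  | zero => simp
  | succ m ih =>
    rw [Finset.sum_range_succ, ih, h]
    simp only [st]
    generalize (Nat.rec (0, 0) (fun y IH ↦ (IH.1 * (b (i, y) + 1) + a (i, y) * (IH.2 + 1),
      IH.2 * b (i, y) + IH.2 + b (i, y))) m : ℕ × ℕ) = z
    have h1 : (z.2 : ℝ) + 1 ≠ 0 := by positivity
    have h2 : (b (i, m) : ℝ) + 1 ≠ 0 := by positivity
    have h3 : ((z.2 * b (i, m) + z.2 + b (i, m) : ℕ) : ℝ) + 1 = (z.2 + 1) * (b (i, m) + 1) := by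
      push_cast; ring
    rw [h3]; push_cast; field_simp

/-- computable families of nonnegative reals, with convergent rational enclosures -/
def CR (f : ι → ℝ) : Prop :=
  ∃ l u : ι × ℕ → ℝ, CQ l ∧ CQ u ∧ (∀ i n, l (i, n) ≤ f i) ∧ (∀ i n, f i ≤ u (i, n)) ∧
    (∀ i, Tendsto (fun n => l (i, n)) atTop (nhds (f i))) ∧
    (∀ i, Tendsto (fun n => u (i, n)) atTop (nhds (f i)))

lemma CR.nonneg {f : ι → ℝ} (h : CR f) (i : ι) : 0 ≤ f i := by
  obtain ⟨l, u, hl, hu, h1, h2, h3, h4⟩ := h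
  exact (hl.nonneg _).trans (h1 i 0)

lemma CR.comp {f : ι → ℝ} (h : CR f) {g : κ → ι} (hg : Computable g) : CR fun i => f (g i) := by
  obtain ⟨l, u, hl, hu, h1, h2, h3, h4⟩ := h
  have e : Computable fun x : κ × ℕ => (g x.1, x.2) := (hg.comp .fst).pair .snd
  exact ⟨_, _, hl.comp e, hu.comp e, fun i n => h1 _ _, fun i n => h2 _ _, fun i => h3 _,
    fun i => h4 _⟩

lemma CR.congr {r s : ι → ℝ} (h : CR r) (e : ∀ i, r i = s i) : CR s := by
  obtain rfl : r = s := funext e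
  exact h

lemma CQ.cr {r : ι → ℝ} (h : CQ r) : CR r :=
  ⟨fun x => r x.1, fun x => r x.1, h.comp .fst, h.comp .fst, fun _ _ => le_rfl, fun _ _ => le_rfl,
    fun _ => tendsto_const_nhds, fun _ => tendsto_const_nhds⟩

lemma CR.nat {f : ι → ℕ} (hf : Computable f) : CR fun i => (f i : ℝ) := (CQ.nat hf).cr

lemma CR.add {f g : ι → ℝ} (hf : CR f) (hg : CR g) : CR fun i => f i + g i := by
  obtain ⟨l, u, hl, hu, h1, h2, h3, h4⟩ := hf
  obtain ⟨l', u', hl', hu', h1', h2', h3', h4'⟩ := hg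
  exact ⟨_, _, hl.add hl', hu.add hu', fun i n => add_le_add (h1 _ _) (h1' _ _),
    fun i n => add_le_add (h2 _ _) (h2' _ _), fun i => (h3 i).add (h3' i),
    fun i => (h4 i).add (h4' i)⟩

lemma CR.mul {f g : ι → ℝ} (hf : CR f) (hg : CR g) : CR fun i => f i * g i := by
  have nf := hf.nonneg
  have ng := hg.nonneg
  obtain ⟨l, u, hl, hu, h1, h2, h3, h4⟩ := hf
  obtain ⟨l', u', hl', hu', h1', h2', h3', h4'⟩ := hg
  exact ⟨_, _, hl.mul hl', hu.mul hu',
    fun i n => mul_le_mul (h1 _ _) (h1' _ _) (hl'.nonneg _) (nf _),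
    fun i n => mul_le_mul (h2 _ _) (h2' _ _) (ng _) (hu.nonneg _), fun i => (h3 i).mul (h3' i),
    fun i => (h4 i).mul (h4' i)⟩

lemma CR.inv {f : ι → ℝ} (hf : CR f) {c : ℝ} (hc : 0 < c) (hcf : ∀ i, c ≤ f i) :
    CR fun i => (f i)⁻¹ := by
  obtain ⟨l, u, hl, hu, h1, h2, h3, h4⟩ := hf
  obtain ⟨m, hm⟩ := exists_nat_one_div_lt hc
  have hm0 : (0 : ℝ) < ((m + 1 : ℕ) : ℝ)⁻¹ := by positivity
  have hm1 : ((m + 1 : ℕ) : ℝ)⁻¹ < c := by simpa using hm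
  have hpos : ∀ i, 0 < f i := fun i => hc.trans_le (hcf i)
  refine ⟨_, _, hu.inv, (hl.max (CQ.nat (Computable.const (m + 1))).inv).inv,
    fun i n => ?_, fun i n => ?_, fun i => ?_, fun i => ?_⟩
  · exact inv_anti₀ (hpos i) (h2 i n)
  · refine inv_anti₀ (lt_max_of_lt_right hm0) (max_le (h1 i n) (hm1.le.trans (hcf i)))
  · exact (h4 i).inv₀ (hpos i).ne'
  · refine Tendsto.inv₀ ?_ (hpos i).ne'
    have := (h3 i).max (tendsto_const_nhds (x := ((m + 1 : ℕ) : ℝ)⁻¹))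
    rwa [max_eq_left (hm1.le.trans (hcf i))] at this

lemma CR.sum {f : ι × ℕ → ℝ} (hf : CR f) {n : ι → ℕ} (hn : Computable n) :
    CR fun i => ∑ j ∈ Finset.range (n i), f (i, j) := by
  obtain ⟨l, u, hl, hu, h1, h2, h3, h4⟩ := hf
  have e : Computable fun x : (ι × ℕ) × ℕ => ((x.1.1, x.2), x.1.2) :=
    ((Computable.fst.comp .fst).pair .snd).pair (Computable.snd.comp .fst)
  refine ⟨_, _, (hl.comp e).sum (hn.comp .fst), (hu.comp e).sum (hn.comp .fst),
    fun i m => ?_, fun i m => ?_, fun i => ?_, fun i => ?_⟩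
  · exact Finset.sum_le_sum fun j _ => h1 _ _
  · exact Finset.sum_le_sum fun j _ => h2 _ _
  · exact tendsto_finsetSum _ fun j _ => h3 _
  · exact tendsto_finsetSum _ fun j _ => h4 _

lemma CR.fast {f : ι → ℝ} (hf : CR f) :
    ∃ l u : ι × ℕ → ℝ, CQ l ∧ CQ u ∧ (∀ i n, l (i, n) ≤ f i) ∧ (∀ i n, f i ≤ u (i, n)) ∧
      ∀ i n, u (i, n) ≤ l (i, n) + ((n + 1 : ℕ) : ℝ)⁻¹ := by
  obtain ⟨l, u, hl, hu, h1, h2, h3, h4⟩ := hf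
  have e : Computable fun x : (ι × ℕ) × ℕ => (x.1.1, x.2) :=
    (Computable.fst.comp .fst).pair .snd
  have e' : Computable fun x : (ι × ℕ) × ℕ => x.1.2 + 1 :=
    cadd (Computable.snd.comp .fst) (.const 1)
  obtain ⟨p, hp, hp'⟩ := (hu.comp e).le ((hl.comp e).add (CQ.nat e').inv)
  obtain ⟨s, hs, hs'⟩ := cs_search (p := fun i n => p (i, n)) hp (fun x => by
    have : Tendsto (fun n => u (x.1, n) - l (x.1, n)) atTop (nhds 0) := by
      simpa using (h4 x.1).sub (h3 x.1)
    have := this.eventually_lt_const (u := ((x.2 + 1 : ℕ) : ℝ)⁻¹) (by positivity)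
    obtain ⟨n, hn⟩ := this.exists
    refine ⟨n, ?_⟩
    rw [hp']
    dsimp only
    linarith)
  have e2 : Computable fun x : ι × ℕ => (x.1, s x) := Computable.fst.pair hs
  refine ⟨_, _, hl.comp e2, hu.comp e2, fun _ _ => h1 _ _, fun _ _ => h2 _ _, fun i n => ?_⟩
  exact (hp' _).1 (hs' (i, n))

lemma CR.lim {f : ι → ℝ} {F E : ι × ℕ → ℝ} (hF : CR F) (hE : CR E) (hf : ∀ i, 0 ≤ f i)
    (h : ∀ i n, |f i - F (i, n)| ≤ E (i, n))
    (h0 : ∀ i, Tendsto (fun n => E (i, n)) atTop (nhds 0)) : CR f := by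
  obtain ⟨l, u, hl, hu, h1, h2, h3⟩ := hF.fast
  obtain ⟨l', u', hl', hu', h1', h2', h3'⟩ := hE.fast
  have e : Computable fun x : ι × ℕ => (x, x.2) := Computable.id.pair .snd
  have hinv : Tendsto (fun n : ℕ => ((n + 1 : ℕ) : ℝ)⁻¹) atTop (nhds 0) := by
    simpa using tendsto_one_div_add_atTop_nhds_zero_nat (𝕜 := ℝ)
  have hb : ∀ i, Tendsto (fun n => 2 * E (i, n) + 2 * ((n + 1 : ℕ) : ℝ)⁻¹) atTop (nhds 0) := by
    intro i; simpa using ((h0 i).const_mul 2).add (hinv.const_mul 2)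
  refine ⟨_, _, (hl.comp e).tsub (hu'.comp e), (hu.comp e).add (hu'.comp e),
    fun i n => ?_, fun i n => ?_, fun i => ?_, fun i => ?_⟩
  · have := abs_le.1 (h i n)
    have := h1 (i, n) n
    have := h2' (i, n) n
    exact max_le (by dsimp only; linarith) (hf i)
  · have := abs_le.1 (h i n)
    have := h2 (i, n) n
    have := h2' (i, n) n
    dsimp only; linarith
  · refine tendsto_of_tendsto_of_tendsto_of_le_of_le
      (by simpa using (tendsto_const_nhds (x := f i)).sub (hb i)) tendsto_const_nhds
      (fun n => ?_) (fun n => ?_)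
    · have := abs_le.1 (h i n)
      have := h2 (i, n) n
      have := h3 (i, n) n
      have := h1' (i, n) n
      have := h3' (i, n) n
      refine le_max_of_le_left ?_
      push_cast at *
      linarith
    · have := abs_le.1 (h i n)
      have := h1 (i, n) n
      have := h2' (i, n) n
      exact max_le (by dsimp only; linarith) (hf i)
  · refine tendsto_of_tendsto_of_tendsto_of_le_of_le tendsto_const_nhds
      (by simpa using (tendsto_const_nhds (x := f i)).add (hb i))
      (fun n => ?_) (fun n => ?_)
    · have := abs_le.1 (h i n)
      have := h2 (i, n) n
      have := h2' (i, n) n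
      dsimp only; linarith
    · have := abs_le.1 (h i n)
      have := h1 (i, n) n
      have := h3 (i, n) n
      have := h1' (i, n) n
      have := h3' (i, n) n
      push_cast at *
      linarith

end CompBasics
section RatCode

open Encodable

lemma cs_search_min {ι : Type} [Primcodable ι] {p : ι → ℕ → Prop} [∀ i, DecidablePred (p i)]
    (hp : Computable₂ fun i n => decide (p i n))
    (h : ∀ i, ∃ n, p i n) : Computable fun i => Nat.find (h i) := by
  have := Partrec.rfind (p := fun i n => Part.some (decide (p i n))) hp.partrec₂
  refine Partrec.of_eq this fun i => ?_
  have : Nat.find (h i) ∈ Nat.rfind fun n => Part.some (decide (p i n)) := by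
    refine Nat.mem_rfind.2 ⟨?_, fun {m} hm => ?_⟩
    · simpa using! (Nat.find_spec (h i))
    · have := Nat.find_min (h i) hm
      simpa using! this
  exact Part.eq_some_iff.2 this

/-- the first encoding of the rationals -/
def ocode (q : ℚ) : ℕ := Nat.pair (Encodable.encode q.num) q.den

lemma int_encode (z : ℤ) : (z.natAbs = (Encodable.encode z + 1) / 2) ∧
    z.toNat = (1 - Encodable.encode z % 2) * (Encodable.encode z / 2) ∧
    (-z).toNat = (Encodable.encode z % 2) * ((Encodable.encode z + 1) / 2) := by
  cases z with
  | ofNat n =>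
    have : Encodable.encode (Int.ofNat n) = 2 * n := rfl
    rw [this]
    have h1 : 2 * n % 2 = 0 := by omega
    have h2 : 2 * n / 2 = n := by omega
    rw [h1, h2]
    simp
    try omega
  | negSucc n =>
    have : Encodable.encode (Int.negSucc n) = 2 * n + 1 := rfl
    rw [this]
    have h1 : (2 * n + 1) % 2 = 1 := by omega
    have h2 : (2 * n + 1 + 1) / 2 = n + 1 := by omega
    rw [h1, h2]
    simp
    try omega

lemma mem_ocode (m : ℕ) : m ∈ Set.range ocode ↔
    (0 < m.unpair.2 ∧ ∀ k < m + 2, ((m.unpair.1 + 1) / 2) % k = 0 → m.unpair.2 % k = 0 → k = 1) := by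
  constructor
  · rintro ⟨q, rfl⟩
    simp only [ocode, Nat.unpair_pair]
    refine ⟨q.den_pos, fun k _ h1 h2 => ?_⟩
    rw [← (int_encode _).1] at h1
    exact Nat.eq_one_of_dvd_coprimes q.reduced (Nat.dvd_of_mod_eq_zero h1)
      (Nat.dvd_of_mod_eq_zero h2)
  · rintro ⟨h0, h⟩
    have hz : Encodable.encode (Denumerable.ofNat ℤ m.unpair.1) = m.unpair.1 :=
      Denumerable.encode_ofNat _
    refine ⟨⟨Denumerable.ofNat ℤ m.unpair.1, m.unpair.2, h0.ne', ?_⟩, ?_⟩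
    · rw [(int_encode _).1, hz]
      have hle := Nat.le_of_dvd h0 (Nat.gcd_dvd_right ((m.unpair.1 + 1) / 2) m.unpair.2)
      have := Nat.unpair_right_le m
      exact h _ (by omega) (Nat.mod_eq_zero_of_dvd (Nat.gcd_dvd_left _ _))
        (Nat.mod_eq_zero_of_dvd (Nat.gcd_dvd_right _ _))
    · simp only [ocode]
      rw [hz, Nat.pair_unpair]

lemma primrec_ocode : PrimrecPred fun m => m ∈ Set.range ocode := by
  have h1 : PrimrecRel fun (k m : ℕ) =>
      (((m.unpair.1 + 1) / 2) % k = 0 → m.unpair.2 % k = 0 → k = 1) := by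
    have a1 : Primrec fun x : ℕ × ℕ => ((x.2.unpair.1 + 1) / 2) % x.1 :=
      Primrec.nat_mod.comp (Primrec.nat_div.comp (Primrec.nat_add.comp
        (Primrec.fst.comp (Primrec.unpair.comp .snd)) (.const 1)) (.const 2)) .fst
    have a2 : Primrec fun x : ℕ × ℕ => x.2.unpair.2 % x.1 :=
      Primrec.nat_mod.comp (Primrec.snd.comp (Primrec.unpair.comp .snd)) .fst
    have b1 : PrimrecPred fun x : ℕ × ℕ => ((x.2.unpair.1 + 1) / 2) % x.1 = 0 :=
      Primrec.eq.comp a1 (.const 0)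
    have b2 : PrimrecPred fun x : ℕ × ℕ => x.2.unpair.2 % x.1 = 0 :=
      Primrec.eq.comp a2 (.const 0)
    have b3 : PrimrecPred fun x : ℕ × ℕ => x.1 = 1 := Primrec.eq.comp .fst (.const 1)
    refine ((b1.not.or b2.not).or b3).of_eq fun x => ?_
    tauto
  have h2 := h1.forall_lt
  have h3 : PrimrecPred fun m : ℕ => 0 < m.unpair.2 :=
    Primrec.nat_lt.comp (.const 0) (Primrec.snd.comp Primrec.unpair)
  have h4 : PrimrecPred fun m : ℕ => ∀ k < m + 2,
      (((m.unpair.1 + 1) / 2) % k = 0 → m.unpair.2 % k = 0 → k = 1) :=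
    h2.comp (Primrec.nat_add.comp .id (.const 2)) .id
  exact (h3.and h4).of_eq fun m => (mem_ocode m).symm

lemma subtype_ofNat_computable (s : Set ℕ) [h : DecidablePred (· ∈ s)] [Infinite s]
    (hs : PrimrecPred fun m => m ∈ s) : Computable fun n => (Nat.Subtype.ofNat s n : ℕ) := by
  have hsd : Computable fun m => decide (m ∈ s) := by
    obtain ⟨i, hi⟩ := hs
    refine hi.to_comp.of_eq fun m => ?_
    congr
  -- successor on all of ℕ
  have hex : ∀ x : ℕ, ∃ m, x + m + 1 ∈ s := by
    intro x
    obtain ⟨y, hy, hxy⟩ := (Set.infinite_coe_iff.1 ‹Infinite s›).exists_gt x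
    exact ⟨y - x - 1, by rwa [show x + (y - x - 1) + 1 = y by omega]⟩
  have hfind : Computable fun x => Nat.find (hex x) := by
    refine cs_search_min (p := fun x m => x + m + 1 ∈ s) ?_ hex
    exact hsd.comp (cadd (cadd Computable.fst Computable.snd) (.const 1))
  have hstep : Computable fun x => x + Nat.find (hex x) + 1 := cadd (cadd .id hfind) (.const 1)
  have := Computable.nat_rec (f := fun n : ℕ => n) (g := fun _ => (Nat.Subtype.ofNat s 0 : ℕ))
    (h := fun _ x => x.2 + Nat.find (hex x.2) + 1) .id (.const _)
    (hstep.comp (Computable.snd.comp Computable.snd))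
  refine this.of_eq fun n => ?_
  induction n with
  | zero => rfl
  | succ n ih =>
    simp only at ih ⊢
    rw [ih]
    rfl

lemma ocode_computable : Computable ocode := by
  have key : ∃ (h : DecidablePred (· ∈ Set.range ocode)) (h' : Infinite (Set.range ocode)),
      ∀ n, ocode (Denumerable.ofNat ℚ n) = @Nat.Subtype.ofNat (Set.range ocode) h h' n := by
    refine ⟨@decidableRangeEncode ℚ Rat.instEncodable,
      Infinite.of_injective _ (Equiv.ofInjective _ (@encode_injective ℚ Rat.instEncodable)).injective,
      fun n => ?_⟩
    let := @decidableRangeEncode ℚ Rat.instEncodable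
    let : Infinite (Set.range (@encode ℚ Rat.instEncodable)) :=
      Infinite.of_injective _ (Equiv.ofInjective _ (@encode_injective ℚ Rat.instEncodable)).injective
    have h1 : Denumerable.ofNat ℚ n = (@equivRangeEncode ℚ Rat.instEncodable).symm
        (@Denumerable.ofNat _ (Nat.Subtype.denumerable (Set.range (@encode ℚ Rat.instEncodable))) n) :=
      @Denumerable.ofEquiv_ofNat (Set.range (@encode ℚ Rat.instEncodable)) ℚ
        (Nat.Subtype.denumerable (Set.range (@encode ℚ Rat.instEncodable))) (@equivRangeEncode ℚ Rat.instEncodable) n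
    have h2 : (@Denumerable.ofNat _
        (Nat.Subtype.denumerable (Set.range (@encode ℚ Rat.instEncodable))) n) =
        Nat.Subtype.ofNat (Set.range (@encode ℚ Rat.instEncodable)) n :=
      Denumerable.ofEquiv_ofNat ℕ _ n
    rw [h2] at h1
    rw [h1]
    exact congrArg Subtype.val ((@equivRangeEncode ℚ Rat.instEncodable).apply_symm_apply _)
  obtain ⟨h, h', key⟩ := key
  have := (subtype_ofNat_computable (Set.range ocode) primrec_ocode).comp
    (Computable.encode (α := ℚ))
  refine this.of_eq fun q => ?_
  rw [← key, Denumerable.ofNat_encode]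

lemma cq_den : Computable fun q : ℚ => q.den := by
  refine (Computable.snd.comp (Primrec.unpair.to_comp.comp ocode_computable)).of_eq fun q => ?_
  simp [ocode]

lemma cq_num : Computable fun q : ℚ => Encodable.encode q.num := by
  refine (Computable.fst.comp (Primrec.unpair.to_comp.comp ocode_computable)).of_eq fun q => ?_
  simp [ocode]

lemma toNat_max (q : ℚ) : max (q : ℝ) 0 = (q.num.toNat : ℝ) / ((q.den - 1 : ℕ) + 1 : ℝ) := by
  have h1 : ((q.den - 1 : ℕ) + 1 : ℝ) = q.den := by
    rw [Nat.cast_sub q.den_pos]; simp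
  have h2 : ((q.num.toNat : ℕ) : ℝ) = max (q.num : ℝ) 0 := by
    have : ((q.num.toNat : ℕ) : ℤ) = max q.num 0 := Int.toNat_eq_max _
    have h := congrArg (fun z : ℤ => (z : ℝ)) this
    push_cast at h
    exact_mod_cast h
  have h3 : (0 : ℝ) < q.den := by exact_mod_cast q.den_pos
  rw [h1, h2, ← max_div_div_right h3.le, zero_div, ← Rat.cast_def]

lemma cq_pos : CQ fun q : ℚ => max (q : ℝ) 0 := by
  have hm : Computable fun q : ℚ => Encodable.encode q.num % 2 :=
    Primrec.nat_mod.to_comp.comp cq_num (.const 2)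
  have hd : Computable fun q : ℚ => Encodable.encode q.num / 2 :=
    Primrec.nat_div.to_comp.comp cq_num (.const 2)
  refine ⟨_, _, cmul (csub (.const 1) hm) hd, csub cq_den (.const 1), fun q => ?_⟩
  rw [← (int_encode _).2.1]
  exact toNat_max q

lemma cq_neg : CQ fun q : ℚ => max (-q : ℝ) 0 := by
  have hm : Computable fun q : ℚ => Encodable.encode q.num % 2 :=
    Primrec.nat_mod.to_comp.comp cq_num (.const 2)
  have hd : Computable fun q : ℚ => (Encodable.encode q.num + 1) / 2 :=
    Primrec.nat_div.to_comp.comp (cadd cq_num (.const 1)) (.const 2)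
  refine ⟨_, _, cmul hm hd, csub cq_den (.const 1), fun q => ?_⟩
  rw [← (int_encode _).2.2]
  have := toNat_max (-q)
  simpa using this

lemma CQ.toRat {ι : Type} [Primcodable ι] {r : ι → ℝ} (hr : CQ r) :
    ∃ q : ι → ℚ, Computable q ∧ ∀ i, (q i : ℝ) = r i := by
  have e : Computable fun x : ι × ℕ => Denumerable.ofNat ℚ x.2 :=
    (Computable.ofNat ℚ).comp .snd
  obtain ⟨p1, hp1, h1⟩ := (hr.comp (Computable.fst (β := ℕ))).le (cq_pos.comp e)
  obtain ⟨p2, hp2, h2⟩ := ((cq_pos.comp e).add (cq_neg.comp e)).le (hr.comp (Computable.fst (β := ℕ)))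
  have ha : Computable₂ fun (i : ι) (n : ℕ) => p1 (i, n) && p2 (i, n) :=
    (Primrec.and.to_comp.comp hp1 hp2)
  obtain ⟨s, hs, hs'⟩ := cs_search ha (fun i => by
    have h0 := hr.nonneg i
    obtain ⟨a, b, -, -, h⟩ := hr
    refine ⟨@Encodable.encode ℚ Rat.instDenumerable.toEncodable ((a i : ℚ) / ((b i : ℚ) + 1)), ?_⟩
    have h3 : (((a i : ℚ) / ((b i : ℚ) + 1) : ℚ) : ℝ) = r i := by rw [h]; push_cast; rfl
    rw [Bool.and_eq_true, h1, h2]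
    simp only [Denumerable.ofNat_encode, h3]
    rw [max_eq_left h0, max_eq_right (by linarith)]
    simp)
  refine ⟨_, (Computable.ofNat ℚ).comp hs, fun i => ?_⟩
  have := hs' i
  rw [Bool.and_eq_true, h1, h2] at this
  obtain ⟨h3, h4⟩ := this
  dsimp only at h3 h4 ⊢
  generalize ((Denumerable.ofNat ℚ (s i) : ℚ) : ℝ) = z at *
  rcases le_total 0 z with hz | hz
  · rw [max_eq_left hz] at *
    rw [max_eq_right (by linarith : -z ≤ 0)] at h4
    linarith
  · rw [max_eq_right hz] at *
    rw [max_eq_left (by linarith : 0 ≤ -z)] at h4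
    have := hr.nonneg i
    linarith

lemma IsComputableReal.cr {ι : Type} [Primcodable ι] {x : ℝ} (hx : 0 ≤ x) (h : IsComputableReal x) :
    CR fun _ : ι => x := by
  obtain ⟨q, hq, h⟩ := h
  have hpow : CR fun y : ι × ℕ => ((2 ^ y.2 : ℕ) : ℝ)⁻¹ :=
    (CQ.nat (cpow Computable.snd)).inv.cr
  refine CR.lim (cq_pos.comp (hq.comp Computable.snd)).cr hpow (fun _ => hx) (fun i n => ?_)
    (fun i => ?_)
  · have := h n
    rw [zpow_neg, zpow_natCast] at this
    push_cast
    refine le_trans ?_ this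
    rw [abs_le]
    have h1 := abs_le.1 (le_refl |x - (q n : ℝ)|)
    rcases le_total 0 (q n : ℝ) with hz | hz
    · rw [max_eq_left hz]; exact h1
    · rw [max_eq_right hz]; constructor <;> linarith
  · have : Tendsto (fun n : ℕ => ((2 : ℝ)⁻¹) ^ n) atTop (nhds 0) :=
      tendsto_pow_atTop_nhds_zero_of_lt_one (by norm_num) (by norm_num)
    refine this.congr fun n => ?_
    push_cast; simp

lemma CR.isComputableReal {x : ℝ} (h : CR fun _ : ℕ => x) : IsComputableReal x := by
  obtain ⟨l, u, hl, hu, h1, h2, h3⟩ := h.fast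
  have e : Computable fun n : ℕ => (n, 2 ^ n) := Computable.id.pair (cpow .id)
  obtain ⟨q, hq, h⟩ := (hl.comp e).toRat
  refine ⟨q, hq, fun n => ?_⟩
  rw [h, zpow_neg, zpow_natCast]
  have a1 := h1 n (2 ^ n)
  have a2 := h2 n (2 ^ n)
  have a3 := h3 n (2 ^ n)
  have a4 : (((2 ^ n + 1 : ℕ)) : ℝ)⁻¹ ≤ ((2 : ℝ) ^ n)⁻¹ := by
    apply inv_anti₀ (by positivity); push_cast; linarith
  rw [abs_le]
  have : (0 : ℝ) < ((2 : ℝ) ^ n)⁻¹ := by positivity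
  constructor <;> linarith

end RatCode
section Riemann

variable {ι κ : Type} [Primcodable ι] [Primcodable κ]

lemma riemann_bound {H : ℝ → ℝ} {L : ℝ} (hL : 0 ≤ L)
    (hH : ∀ x y, x ∈ Set.Icc (0 : ℝ) 1 → y ∈ Set.Icc (0 : ℝ) 1 → |H x - H y| ≤ L * |x - y|)
    (N : ℕ) : |(∫ t in (0 : ℝ)..1, H t) -
      ∑ j ∈ Finset.range (N + 1), ((N + 1 : ℕ) : ℝ)⁻¹ * H (j / ((N : ℝ) + 1))|
        ≤ L * ((N + 1 : ℕ) : ℝ)⁻¹ := by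
  have hN : (0 : ℝ) < (N : ℝ) + 1 := by positivity
  have hcont : ContinuousOn H (Set.Icc 0 1) := by
    have : LipschitzOnWith L.toNNReal H (Set.Icc 0 1) := by
      refine LipschitzOnWith.of_dist_le_mul fun x hx y hy => ?_
      rw [Real.dist_eq, Real.dist_eq, Real.coe_toNNReal _ hL]
      exact hH x y hx hy
    exact this.continuousOn
  set a : ℕ → ℝ := fun j => j / ((N : ℝ) + 1) with ha
  have hdiff : ∀ j, a (j + 1) - a j = ((N : ℝ) + 1)⁻¹ := by
    intro j; simp only [ha]; push_cast; field_simp; ring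
  have hmem : ∀ j ≤ N + 1, a j ∈ Set.Icc (0 : ℝ) 1 := by
    intro j hj
    refine ⟨by simp only [ha]; positivity, ?_⟩
    simp only [ha]
    rw [div_le_one hN]
    exact_mod_cast hj
  have hle : ∀ j, a j ≤ a (j + 1) := by
    intro j
    have := hdiff j
    have : 0 < ((N : ℝ) + 1)⁻¹ := by positivity
    linarith
  have hsub : ∀ j < N + 1, Set.Icc (a j) (a (j + 1)) ⊆ Set.Icc 0 1 := fun j hj =>
    Set.Icc_subset_Icc (hmem j hj.le).1 (hmem (j + 1) hj).2
  have hintg : ∀ j < N + 1, IntervalIntegrable H volume (a j) (a (j + 1)) := by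
    intro j hj
    refine ContinuousOn.intervalIntegrable ?_
    rw [Set.uIcc_of_le (hle j)]
    exact hcont.mono (hsub j hj)
  have hsum := intervalIntegral.sum_integral_adjacent_intervals hintg
  have e0 : a 0 = 0 := by simp [ha]
  have e1 : a (N + 1) = 1 := by simp only [ha]; push_cast; field_simp
  rw [e0, e1] at hsum
  rw [← hsum, ← Finset.sum_sub_distrib]
  have hterm : ∀ j ∈ Finset.range (N + 1), |(∫ t in a j..a (j + 1), H t) -
      ((N + 1 : ℕ) : ℝ)⁻¹ * H (j / ((N : ℝ) + 1))| ≤ L * ((N : ℝ) + 1)⁻¹ * ((N : ℝ) + 1)⁻¹ := by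
    intro j hj
    rw [Finset.mem_range] at hj
    have : (∫ t in a j..a (j + 1), H t) - ((N + 1 : ℕ) : ℝ)⁻¹ * H (j / ((N : ℝ) + 1))
        = ∫ t in a j..a (j + 1), (H t - H (a j)) := by
      rw [intervalIntegral.integral_sub (hintg j hj) intervalIntegrable_const,
        intervalIntegral.integral_const, hdiff]
      push_cast; rfl
    rw [this]
    have hb := intervalIntegral.norm_integral_le_of_norm_le_const (a := a j) (b := a (j + 1))
      (f := fun t => H t - H (a j)) (C := L * ((N : ℝ) + 1)⁻¹) (fun t ht => by
        rw [Set.uIoc_of_le (hle j)] at ht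
        have h1 := hH t (a j) (hsub j hj ⟨ht.1.le, ht.2⟩) (hmem j hj.le)
        rw [Real.norm_eq_abs]
        refine h1.trans (mul_le_mul_of_nonneg_left ?_ hL)
        rw [abs_of_pos (by linarith [ht.1])]
        linarith [ht.2, hdiff j])
    rw [Real.norm_eq_abs, hdiff, abs_of_pos (by positivity : 0 < ((N : ℝ) + 1)⁻¹)] at hb
    exact hb
  refine (Finset.abs_sum_le_sum_abs _ _).trans ((Finset.sum_le_sum hterm).trans ?_)
  rw [Finset.sum_const, Finset.card_range, nsmul_eq_mul]
  push_cast
  apply le_of_eq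
  field_simp

lemma tendsto_inv_succ : Tendsto (fun n : ℕ => ((n + 1 : ℕ) : ℝ)⁻¹) atTop (nhds 0) := by
  simpa using tendsto_one_div_add_atTop_nhds_zero_nat (𝕜 := ℝ)

lemma CR.integral {H : ι → ℝ → ℝ} {L : ι → ℝ} {G : (ι × ℕ) × ℕ → ℝ} (hG : CR G) (hL : CR L)
    (hH : ∀ i x y, x ∈ Set.Icc (0 : ℝ) 1 → y ∈ Set.Icc (0 : ℝ) 1 →
      |H i x - H i y| ≤ L i * |x - y|)
    (hGH : ∀ i N j, j ≤ N → G ((i, N), j) = H i (j / ((N : ℝ) + 1)))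
    (h0 : ∀ i, ∀ t ∈ Set.Icc (0 : ℝ) 1, 0 ≤ H i t) :
    CR fun i => ∫ t in (0 : ℝ)..1, H i t := by
  have c1 : Computable fun x : ι × ℕ => x.2 + 1 := cadd .snd (.const 1)
  have hinv : CR fun x : ι × ℕ => ((x.2 + 1 : ℕ) : ℝ)⁻¹ := (CQ.nat c1).inv.cr
  refine CR.lim (((hinv.comp (Computable.fst (β := ℕ))).mul hG).sum c1)
    ((hL.comp Computable.fst).mul hinv) (fun i => ?_) (fun i N => ?_) (fun i => ?_)
  · exact intervalIntegral.integral_nonneg zero_le_one (h0 i)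
  · have := riemann_bound (hL.nonneg i) (hH i) N
    have hs : ∑ j ∈ Finset.range (N + 1), ((N + 1 : ℕ) : ℝ)⁻¹ * G ((i, N), j) =
        ∑ j ∈ Finset.range (N + 1), ((N + 1 : ℕ) : ℝ)⁻¹ * H i (j / ((N : ℝ) + 1)) :=
      Finset.sum_congr rfl fun j hj => by
        rw [hGH i N j (by simpa [Nat.lt_succ_iff] using hj)]
    dsimp only
    rw [hs]
    exact this
  · simpa using tendsto_inv_succ.const_mul (L i)

lemma log_integral {y : ℝ} (hy : 0 ≤ y) :
    ∫ t in (0 : ℝ)..1, y * (1 + y * t)⁻¹ = Real.log (1 + y) := by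
  have hpos : ∀ t ∈ Set.uIcc (0 : ℝ) 1, 0 < 1 + y * t := by
    intro t ht
    rw [Set.uIcc_of_le zero_le_one] at ht
    have := mul_nonneg hy ht.1
    linarith
  have := intervalIntegral.integral_eq_sub_of_hasDerivAt (a := 0) (b := 1)
    (f := fun t => Real.log (1 + y * t)) (f' := fun t => y * (1 + y * t)⁻¹) (fun t ht => by
      have h1 : HasDerivAt (fun t => 1 + y * t) y t := by
        simpa using ((hasDerivAt_id t).const_mul y).const_add 1
      have := h1.log (hpos t ht).ne'
      rwa [div_eq_mul_inv] at this) (by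
      refine ContinuousOn.intervalIntegrable ?_
      refine continuousOn_const.mul (ContinuousOn.inv₀ (by fun_prop) fun t ht => (hpos t ht).ne'))
  rw [this]; simp

lemma CR.log1p {y : ι → ℝ} (hy : CR y) : CR fun i => Real.log (1 + y i) := by
  have hn := hy.nonneg
  have e : Computable fun x : (ι × ℕ) × ℕ => x.1.1 := Computable.fst.comp .fst
  have e1 : Computable fun x : (ι × ℕ) × ℕ => x.1.2 + 1 :=
    cadd (Computable.snd.comp .fst) (.const 1)
  have ht : CR fun x : (ι × ℕ) × ℕ => ((x.2 : ℕ) : ℝ) * ((x.1.2 + 1 : ℕ) : ℝ)⁻¹ :=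
    ((CQ.nat .snd).mul (CQ.nat e1).inv).cr
  have hd : CR fun x : (ι × ℕ) × ℕ =>
      ((1 : ℕ) : ℝ) + y x.1.1 * (((x.2 : ℕ) : ℝ) * ((x.1.2 + 1 : ℕ) : ℝ)⁻¹) :=
    (CR.nat (.const 1)).add ((hy.comp e).mul ht)
  have hd' := hd.inv (c := 1) one_pos (fun x => by
    have h1 := hn x.1.1
    have := ht.nonneg x
    push_cast at *
    have := mul_nonneg h1 this
    linarith)
  refine (CR.integral (H := fun i t => y i * (1 + y i * t)⁻¹) ((hy.comp e).mul hd') (hy.mul hy)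
    (fun i s t hs ht => ?_) (fun i N j _ => ?_) (fun i t ht => ?_)).congr fun i => log_integral (hn i)
  · have h1 := mul_nonneg (hn i) hs.1
    have h2 := mul_nonneg (hn i) ht.1
    have : y i * (1 + y i * s)⁻¹ - y i * (1 + y i * t)⁻¹ =
        (y i * y i) * ((1 + y i * s)⁻¹ * (1 + y i * t)⁻¹) * (t - s) := by
      field_simp; ring
    rw [this, abs_mul, abs_sub_comm t s]
    refine mul_le_mul_of_nonneg_right ?_ (abs_nonneg _)
    rw [abs_of_nonneg (mul_nonneg (mul_nonneg (hn i) (hn i)) (by positivity))]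
    refine mul_le_of_le_one_right (mul_nonneg (hn i) (hn i)) ?_
    exact mul_le_one₀ (inv_le_one_of_one_le₀ (by linarith)) (by positivity)
      (inv_le_one_of_one_le₀ (by linarith))
  · push_cast; simp only [div_eq_mul_inv]
  · have h1 := mul_nonneg (hn i) ht.1
    have := hn i
    positivity

lemma log_lip {x y : ℝ} (hx : 1 ≤ x) (hy : 1 ≤ y) : |Real.log x - Real.log y| ≤ |x - y| := by
  have key : ∀ x y : ℝ, 1 ≤ x → 1 ≤ y → Real.log x - Real.log y ≤ |x - y| := by
    intro x y hx hy
    rw [← Real.log_div (by positivity) (by positivity)]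
    refine (Real.log_le_sub_one_of_pos (by positivity)).trans ?_
    have : x / y - 1 = (x - y) * y⁻¹ := by field_simp
    rw [this]
    refine (le_abs_self _).trans ?_
    rw [abs_mul]
    refine mul_le_of_le_one_right (abs_nonneg _) ?_
    rw [abs_of_nonneg (by positivity)]
    exact inv_le_one_of_one_le₀ hy
  rw [abs_le]
  have h1 := key x y hx hy
  have h2 := key y x hy hx
  rw [abs_sub_comm] at h2
  constructor <;> linarith

/-- admissible weights -/
structure Wt (w : ℝ → ℝ) (B : ℕ) : Prop where
  nn : ∀ α, 2 ≤ α → 0 ≤ w α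
  le : ∀ α, 2 ≤ α → w α ≤ B * α
  lip : ∀ α β, 2 ≤ α → 2 ≤ β → |w α - w β| ≤ B * |α - β|
  cr : ∀ {ι : Type} [Primcodable ι] (r : ι → ℝ), CQ r → CR fun i => w (2 + r i)

lemma wt_one : Wt (fun _ => 1) 1 where
  nn _ _ := zero_le_one
  le α h := by simp; linarith
  lip α β _ _ := by simp
  cr r _ := (CR.nat (.const 1)).congr fun i => by simp

lemma wt_log : Wt Real.log 1 where
  nn α h := Real.log_nonneg (by linarith)
  le α h := by simpa using Real.log_le_self (by linarith)
  lip α β h h' := by simpa using log_lip (by linarith) (by linarith)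
  cr r hr := ((CQ.nat (.const 1)).add hr).cr.log1p.congr fun i => by
    congr 1; push_cast; ring

lemma inv_lip {α β : ℝ} (h : 1 ≤ α) (h' : 1 ≤ β) : |α⁻¹ - β⁻¹| ≤ |α - β| := by
  have : α⁻¹ - β⁻¹ = (α⁻¹ * β⁻¹) * (β - α) := by field_simp
  rw [this, abs_mul, abs_sub_comm]
  refine mul_le_of_le_one_left (abs_nonneg _) ?_
  rw [abs_of_nonneg (by positivity)]
  exact mul_le_one₀ (inv_le_one_of_one_le₀ h) (by positivity) (inv_le_one_of_one_le₀ h')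

lemma wt_main {s : ℝ} (hs : 0 ≤ s) (hsc : ∀ {ι : Type} [Primcodable ι], CR fun _ : ι => s)
    {B : ℕ} (hB : s ≤ B) : Wt (fun α => Real.log (1 + s / α ^ 2)) B where
  nn α h := Real.log_nonneg (by have : 0 ≤ s / α ^ 2 := by positivity
                                linarith)
  le α h := by
    have h1 : 0 ≤ s / α ^ 2 := by positivity
    refine (Real.log_le_sub_one_of_pos (by linarith)).trans ?_
    have : s / α ^ 2 ≤ s := div_le_self hs (by nlinarith)
    have hB0 : (0 : ℝ) ≤ B := hs.trans hB
    nlinarith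
  lip α β h h' := by
    have h1 : 0 ≤ s / α ^ 2 := by positivity
    have h2 : 0 ≤ s / β ^ 2 := by positivity
    refine (log_lip (by linarith) (by linarith)).trans ?_
    have : 1 + s / α ^ 2 - (1 + s / β ^ 2) = (s * ((α + β) / (α ^ 2 * β ^ 2))) * (β - α) := by
      field_simp; ring
    rw [this, abs_mul, abs_sub_comm β α]
    refine mul_le_mul_of_nonneg_right ?_ (abs_nonneg _)
    have h3 : (α + β) / (α ^ 2 * β ^ 2) ≤ 1 := by
      rw [div_le_one (by positivity)]
      have : 4 ≤ α * β := by nlinarith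
      nlinarith
    rw [abs_of_nonneg (by positivity)]
    exact (mul_le_of_le_one_right hs h3).trans hB
  cr r hr := by
    have h2 := (CQ.nat (.const 2)).add hr
    refine (hsc.mul (h2.mul h2).inv.cr).log1p.congr fun i => ?_
    push_cast
    rw [div_eq_mul_inv, sq]

end Riemann
section Pieces

lemma lipmul {a b c d A C LA LC δ : ℝ} (hδ : 0 ≤ δ) (ha : |a| ≤ A) (hd : |d| ≤ C)
    (hab : |a - b| ≤ LA * δ) (hcd : |c - d| ≤ LC * δ) :
    |a * c - b * d| ≤ (A * LC + LA * C) * δ := by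
  have : a * c - b * d = a * (c - d) + (a - b) * d := by ring
  rw [this]
  refine (abs_add_le _ _).trans ?_
  rw [abs_mul, abs_mul]
  have hA : 0 ≤ A := (abs_nonneg _).trans ha
  have hC : 0 ≤ C := (abs_nonneg _).trans hd
  have h1 : |a| * |c - d| ≤ A * (LC * δ) := mul_le_mul ha hcd (abs_nonneg _) hA
  have h2 : |a - b| * |d| ≤ LA * δ * C :=
    mul_le_mul hab hd (abs_nonneg _) ((abs_nonneg _).trans hab)
  linarith

lemma one_le_log {x : ℝ} (hx : 3 ≤ x) : 1 ≤ Real.log x := by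
  rw [Real.le_log_iff_exp_le (by linarith)]
  linarith [Real.exp_one_lt_three]

/-- the integrand on the middle piece -/
noncomputable def vv (w : ℝ → ℝ) (α : ℝ) : ℝ :=
  w α * (α⁻¹ * ((Real.log α)⁻¹ * (Real.log α)⁻¹))

lemma vv_lip {w : ℝ → ℝ} {B : ℕ} (hw : Wt w B) {R x y : ℝ} (hx : 3 ≤ x) (hy : 3 ≤ y)
    (hxR : x ≤ R) :
    |vv w x - vv w y| ≤ (B * R * 3 + B) * |x - y| := by
  have hlx := one_le_log hx
  have hly := one_le_log hy
  have hi : ∀ z : ℝ, 1 ≤ z → |z⁻¹| ≤ 1 := by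
    intro z hz
    rw [abs_of_nonneg (by positivity)]
    exact inv_le_one_of_one_le₀ hz
  have h1 : |(Real.log x)⁻¹ - (Real.log y)⁻¹| ≤ 1 * |x - y| := by
    rw [one_mul]
    exact (inv_lip hlx hly).trans (log_lip (by linarith) (by linarith))
  have h2 := lipmul (abs_nonneg (x - y)) (hi _ hlx) (hi _ hly) h1 h1
  have h3 : |x⁻¹ - y⁻¹| ≤ 1 * |x - y| := by
    rw [one_mul]; exact inv_lip (by linarith) (by linarith)
  have hb : |(Real.log y)⁻¹ * (Real.log y)⁻¹| ≤ 1 := by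
    rw [abs_mul]; exact mul_le_one₀ (hi _ hly) (abs_nonneg _) (hi _ hly)
  have h4 := lipmul (abs_nonneg (x - y)) (hi x (by linarith)) hb h3 h2
  have hb' : |y⁻¹ * ((Real.log y)⁻¹ * (Real.log y)⁻¹)| ≤ 1 := by
    rw [abs_mul]; exact mul_le_one₀ (hi _ (by linarith)) (abs_nonneg _) hb
  have hwb : |w x| ≤ B * R := by
    rw [abs_of_nonneg (hw.nn _ (by linarith))]
    exact (hw.le _ (by linarith)).trans (by gcongr)
  have h5 := lipmul (abs_nonneg (x - y)) hwb hb' (hw.lip x y (by linarith) (by linarith)) h4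
  refine h5.trans (le_of_eq ?_)
  ring

lemma vv_nonneg {w : ℝ → ℝ} {B : ℕ} (hw : Wt w B) {x : ℝ} (hx : 3 ≤ x) : 0 ≤ vv w x := by
  have := one_le_log hx
  have := hw.nn x (by linarith)
  unfold vv
  positivity

/-- explicit value of the integral of `g_{k+4} * w` -/
noncomputable def Tval (w : ℝ → ℝ) (k : ℕ) : ℝ :=
  (3 * (Real.log 3 * Real.log 3))⁻¹ * (∫ t in (0 : ℝ)..1, t * w (2 + t)) +
  (((k + 1 : ℕ) : ℝ) * (∫ t in (0 : ℝ)..1, vv w (3 + ((k + 1 : ℕ) : ℝ) * t)) +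
   (((k + 4 : ℕ) : ℝ) * (Real.log ((k + 4 : ℕ) : ℝ) * Real.log ((k + 4 : ℕ) : ℝ)))⁻¹ *
    (∫ t in (0 : ℝ)..1, (1 - t) * w (((k + 4 : ℕ) : ℝ) + t)))

lemma abs_le_one_of_mem {t : ℝ} (ht : t ∈ Set.Icc (0 : ℝ) 1) : |t| ≤ 1 :=
  abs_le.2 ⟨by linarith [ht.1], ht.2⟩

variable {w : ℝ → ℝ} {B : ℕ}

lemma cr_log_nat : CR fun k : ℕ => Real.log ((k + 4 : ℕ) : ℝ) :=
  (wt_log.cr _ (CQ.nat (cadd (ι := ℕ) .id (.const 2)))).congr fun k => by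
    congr 1; push_cast; simp only [id]; ring

lemma cr_log3 {ι : Type} [Primcodable ι] : CR fun _ : ι => Real.log 3 :=
  (wt_log.cr _ (CQ.nat (ι := ι) (.const 1))).congr fun k => by
    congr 1; push_cast; ring

lemma cr_J1 (hw : Wt w B) : CR fun _ : ℕ => ∫ t in (0 : ℝ)..1, t * w (2 + t) := by
  have e1 : Computable fun x : (ℕ × ℕ) × ℕ => x.1.2 + 1 :=
    cadd (Computable.snd.comp .fst) (.const 1)
  have ht : CQ fun x : (ℕ × ℕ) × ℕ => ((x.2 : ℕ) : ℝ) * ((x.1.2 + 1 : ℕ) : ℝ)⁻¹ :=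
    (CQ.nat .snd).mul (CQ.nat e1).inv
  refine CR.integral (H := fun _ t => t * w (2 + t)) (L := fun _ => ((4 * B : ℕ) : ℝ))
    (ht.cr.mul (hw.cr _ ht)) (CR.nat (.const _)) (fun i x y hx hy => ?_) (fun i N j _ => ?_)
    (fun i t ht => mul_nonneg ht.1 (hw.nn _ (by linarith [ht.1])))
  · have h1 := hw.lip (2 + x) (2 + y) (by linarith [hx.1]) (by linarith [hy.1])
    rw [add_sub_add_left_eq_sub] at h1
    have h2 : |w (2 + y)| ≤ 3 * B := by
      rw [abs_of_nonneg (hw.nn _ (by linarith [hy.1]))]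
      refine (hw.le _ (by linarith [hy.1])).trans ?_
      rw [mul_comm]
      exact mul_le_mul_of_nonneg_right (by linarith [hy.2]) (Nat.cast_nonneg _)
    refine (lipmul (abs_nonneg (x - y)) (abs_le_one_of_mem hx) h2
      (LA := 1) (by rw [one_mul]) h1).trans (le_of_eq ?_)
    push_cast; ring
  · push_cast; simp only [div_eq_mul_inv]

lemma cr_J3 (hw : Wt w B) :
    CR fun k : ℕ => ∫ t in (0 : ℝ)..1, (1 - t) * w (((k + 4 : ℕ) : ℝ) + t) := by
  have e1 : Computable fun x : (ℕ × ℕ) × ℕ => x.1.2 + 1 :=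
    cadd (Computable.snd.comp .fst) (.const 1)
  have e2 : Computable fun x : (ℕ × ℕ) × ℕ => x.1.1 + 2 :=
    cadd (Computable.fst.comp .fst) (.const 2)
  have e3 : Computable fun x : (ℕ × ℕ) × ℕ => x.1.2 + 1 - x.2 := csub e1 .snd
  have ht : CQ fun x : (ℕ × ℕ) × ℕ => ((x.2 : ℕ) : ℝ) * ((x.1.2 + 1 : ℕ) : ℝ)⁻¹ :=
    (CQ.nat .snd).mul (CQ.nat e1).inv
  have hs : CQ fun x : (ℕ × ℕ) × ℕ => ((x.1.2 + 1 - x.2 : ℕ) : ℝ) * ((x.1.2 + 1 : ℕ) : ℝ)⁻¹ :=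
    (CQ.nat e3).mul (CQ.nat e1).inv
  refine CR.integral (H := fun (k : ℕ) t => (1 - t) * w (((k + 4 : ℕ) : ℝ) + t))
    (L := fun k => ((B + B * (k + 5) : ℕ) : ℝ))
    (hs.cr.mul (hw.cr _ ((CQ.nat e2).add ht)))
    (CR.nat (cadd (.const B) (cmul (.const B) (cadd .id (.const 5)))))
    (fun k x y hx hy => ?_) (fun k N j hj => ?_)
    (fun k t ht => mul_nonneg (by linarith [ht.2]) (hw.nn _ (by
      push_cast; have : (0 : ℝ) ≤ k := k.cast_nonneg
      linarith [ht.1])))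
  · have hk : (0 : ℝ) ≤ k := k.cast_nonneg
    have h1 := hw.lip (((k + 4 : ℕ) : ℝ) + x) (((k + 4 : ℕ) : ℝ) + y)
      (by push_cast; linarith [hx.1]) (by push_cast; linarith [hy.1])
    rw [add_sub_add_left_eq_sub] at h1
    have h2 : |w (((k + 4 : ℕ) : ℝ) + y)| ≤ B * (k + 5) := by
      rw [abs_of_nonneg (hw.nn _ (by push_cast; linarith [hy.1]))]
      refine (hw.le _ (by push_cast; linarith [hy.1])).trans ?_
      exact mul_le_mul_of_nonneg_left (by push_cast; linarith [hy.2]) (Nat.cast_nonneg _)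
    have h3 : |1 - x| ≤ 1 := abs_le.2 ⟨by linarith [hx.2], by linarith [hx.1]⟩
    refine (lipmul (abs_nonneg (x - y)) h3 h2 (b := 1 - y)
      (LA := 1) (by rw [one_mul, sub_sub_sub_cancel_left, abs_sub_comm]) h1).trans (le_of_eq ?_)
    push_cast; ring
  · have h1 : ((N + 1 - j : ℕ) : ℝ) * ((N + 1 : ℕ) : ℝ)⁻¹ = 1 - j / ((N : ℝ) + 1) := by
      rw [Nat.cast_sub (by omega)]; push_cast
      have : (N : ℝ) + 1 ≠ 0 := by positivity
      field_simp
    have h2 : 2 + (((k + 2 : ℕ) : ℝ) + (j : ℝ) * ((N + 1 : ℕ) : ℝ)⁻¹) =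
        ((k + 4 : ℕ) : ℝ) + j / ((N : ℝ) + 1) := by
      push_cast; rw [div_eq_mul_inv]; ring
    dsimp only
    rw [h1, h2]

lemma cr_J2 (hw : Wt w B) :
    CR fun k : ℕ => ∫ t in (0 : ℝ)..1, vv w (3 + ((k + 1 : ℕ) : ℝ) * t) := by
  have e1 : Computable fun x : (ℕ × ℕ) × ℕ => x.1.2 + 1 :=
    cadd (Computable.snd.comp .fst) (.const 1)
  have e2 : Computable fun x : (ℕ × ℕ) × ℕ => x.1.1 + 1 :=
    cadd (Computable.fst.comp .fst) (.const 1)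
  have ht : CQ fun x : (ℕ × ℕ) × ℕ => ((x.2 : ℕ) : ℝ) * ((x.1.2 + 1 : ℕ) : ℝ)⁻¹ :=
    (CQ.nat .snd).mul (CQ.nat e1).inv
  have hr : CQ fun x : (ℕ × ℕ) × ℕ => ((1 : ℕ) : ℝ) +
      ((x.1.1 + 1 : ℕ) : ℝ) * (((x.2 : ℕ) : ℝ) * ((x.1.2 + 1 : ℕ) : ℝ)⁻¹) :=
    (CQ.nat (.const 1)).add ((CQ.nat e2).mul ht)
  have hα := (CQ.nat (.const 2)).add hr
  have hlog := (wt_log.cr _ hr).inv (c := 1) one_pos (fun x => one_le_log (by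
    have := mul_nonneg (Nat.cast_nonneg (α := ℝ) (x.1.1 + 1)) (ht.nonneg x)
    rw [Nat.cast_one]; linarith))
  refine CR.integral (H := fun (k : ℕ) t => vv w (3 + ((k + 1 : ℕ) : ℝ) * t))
    (L := fun k => (((B * (k + 4) * 3 + B) * (k + 1) : ℕ) : ℝ))
    ((hw.cr _ hr).mul (hα.inv.cr.mul (hlog.mul hlog)))
    (CR.nat (cmul (cadd (cmul (cmul (.const B) (cadd .id (.const 4))) (.const 3)) (.const B))
      (cadd .id (.const 1))))
    (fun k x y hx hy => ?_) (fun k N j hj => ?_)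
    (fun k t ht => vv_nonneg hw (by
      have := mul_nonneg (Nat.cast_nonneg (α := ℝ) (k + 1)) ht.1
      linarith))
  · have hk : (0 : ℝ) ≤ ((k + 1 : ℕ) : ℝ) := Nat.cast_nonneg _
    have := mul_nonneg hk hx.1
    have := mul_nonneg hk hy.1
    have := mul_le_of_le_one_right hk hx.2
    refine (vv_lip hw (R := k + 4) (by linarith) (by linarith)
      (by push_cast at *; linarith)).trans (le_of_eq ?_)
    rw [add_sub_add_left_eq_sub, ← mul_sub, abs_mul, abs_of_nonneg hk]
    push_cast; ring
  · have h2 : (2 : ℝ) + (((1 : ℕ) : ℝ) + ((k + 1 : ℕ) : ℝ) * ((j : ℝ) * ((N + 1 : ℕ) : ℝ)⁻¹)) =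
        3 + ((k + 1 : ℕ) : ℝ) * (j / ((N : ℝ) + 1)) := by
      push_cast; rw [div_eq_mul_inv]; ring
    dsimp only
    have h22 : ((2 : ℕ) : ℝ) = 2 := Nat.cast_ofNat
    rw [h22, h2, vv]

lemma cr_Tval (hw : Wt w B) : CR (Tval w) := by
  have h3 : CR fun _ : ℕ => (3 * (Real.log 3 * Real.log 3))⁻¹ := by
    have h := (CR.nat (ι := ℕ) (.const 3)).mul (cr_log3.mul cr_log3)
    refine (h.inv (c := 1) one_pos fun _ => ?_).congr fun _ => by push_cast; rfl
    have := one_le_log le_rfl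
    push_cast; nlinarith
  have h4 : CR fun k : ℕ =>
      (((k + 4 : ℕ) : ℝ) * (Real.log ((k + 4 : ℕ) : ℝ) * Real.log ((k + 4 : ℕ) : ℝ)))⁻¹ := by
    have h := (CR.nat (ι := ℕ) (cadd .id (.const 4))).mul (cr_log_nat.mul cr_log_nat)
    refine h.inv (c := 1) one_pos fun k => ?_
    have hk : (0 : ℝ) ≤ k := k.cast_nonneg
    have := one_le_log (x := ((k + 4 : ℕ) : ℝ)) (by push_cast; linarith)
    have h5 : (1 : ℝ) ≤ ((k + 4 : ℕ) : ℝ) := by push_cast; linarith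
    simp only [id]
    exact one_le_mul_of_one_le_of_one_le h5 (one_le_mul_of_one_le_of_one_le this this)
  exact (h3.mul (cr_J1 hw)).add (((CR.nat (ι := ℕ) (cadd .id (.const 1))).mul (cr_J2 hw)).add
    (h4.mul (cr_J3 hw)))

end Pieces
section Analytic

variable {w : ℝ → ℝ} {B : ℕ}

lemma Wt.cont (hw : Wt w B) : ContinuousOn w (Set.Ici 2) := by
  have : LipschitzOnWith (B : NNReal) w (Set.Ici 2) := by
    refine LipschitzOnWith.of_dist_le_mul fun x hx y hy => ?_
    rw [Real.dist_eq, Real.dist_eq]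
    simpa using hw.lip x y hx hy
  exact this.continuousOn

lemma vv_cont (hw : Wt w B) : ContinuousOn (vv w) (Set.Ici 3) := by
  have hlog : ContinuousOn (fun α => (Real.log α)⁻¹) (Set.Ici 3) := by
    refine ContinuousOn.inv₀ (Real.continuousOn_log.mono fun x hx => ?_) fun x hx => ?_
    · simp only [Set.mem_Ici] at hx
      simp only [Set.mem_compl_iff, Set.mem_singleton_iff]
      linarith
    · have := one_le_log hx
      linarith
  refine (hw.cont.mono (Set.Ici_subset_Ici.2 (by norm_num))).mul
    (ContinuousOn.mul (continuousOn_id.inv₀ fun x hx => ?_) (hlog.mul hlog))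
  simp only [Set.mem_Ici] at hx
  simp only [id]
  linarith

lemma gM_split (w : ℝ → ℝ) (k : ℕ) (α : ℝ) : gM (k + 4) α * w α =
    (Set.Ioc 2 3).indicator (fun α => (3 * (Real.log 3 * Real.log 3))⁻¹ * ((α - 2) * w α)) α +
    ((Set.Ioc 3 ((k + 4 : ℕ) : ℝ)).indicator (vv w) α +
    (Set.Ioc ((k + 4 : ℕ) : ℝ) (((k + 4 : ℕ) : ℝ) + 1)).indicator (fun α =>
      (((k + 4 : ℕ) : ℝ) * (Real.log ((k + 4 : ℕ) : ℝ) * Real.log ((k + 4 : ℕ) : ℝ)))⁻¹ *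
      ((((k + 4 : ℕ) : ℝ) + 1 - α) * w α)) α) := by
  have hM : (4 : ℝ) ≤ ((k + 4 : ℕ) : ℝ) := by push_cast; linarith [Nat.cast_nonneg (α := ℝ) k]
  unfold gM vv
  generalize ((k + 4 : ℕ) : ℝ) = M at *
  simp only [Set.indicator_apply, Set.mem_Ioc]
  by_cases h2 : α ≤ 2
  · have a1 : ¬ (2 < α ∧ α ≤ 3) := fun h => by linarith [h.1]
    have a2 : ¬ (3 < α ∧ α ≤ M) := fun h => by linarith [h.1]
    have a3 : ¬ (M < α ∧ α ≤ M + 1) := fun h => by linarith [h.1]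
    rw [if_pos h2, if_neg a1, if_neg a2, if_neg a3]; ring
  rw [if_neg h2]
  rw [not_le] at h2
  by_cases h3 : α ≤ 3
  · have a2 : ¬ (3 < α ∧ α ≤ M) := fun h => by linarith [h.1]
    have a3 : ¬ (M < α ∧ α ≤ M + 1) := fun h => by linarith [h.1]
    rw [if_pos h3, if_pos ⟨h2, h3⟩, if_neg a2, if_neg a3, div_eq_mul_inv]; ring
  rw [if_neg h3]
  have a1 : ¬ (2 < α ∧ α ≤ 3) := fun h => h3 h.2
  rw [if_neg a1]
  rw [not_le] at h3
  by_cases h4 : α ≤ M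
  · have a3 : ¬ (M < α ∧ α ≤ M + 1) := fun h => by linarith [h.1]
    rw [if_pos h4, if_pos ⟨h3, h4⟩, if_neg a3, one_div, mul_inv, sq, mul_inv]; ring
  have a2 : ¬ (3 < α ∧ α ≤ M) := fun h => h4 h.2
  rw [if_neg h4, if_neg a2]
  rw [not_le] at h4
  by_cases h5 : α ≤ M + 1
  · rw [if_pos h5, if_pos ⟨h4, h5⟩, div_eq_mul_inv]; ring
  · have a3 : ¬ (M < α ∧ α ≤ M + 1) := fun h => h5 h.2
    rw [if_neg h5, if_neg a3]; ring

lemma int_Ioc {f : ℝ → ℝ} {a b : ℝ} (h : ContinuousOn f (Set.Icc a b)) :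
    Integrable ((Set.Ioc a b).indicator f) := by
  rw [integrable_indicator_iff measurableSet_Ioc]
  exact (h.integrableOn_Icc).mono_set Set.Ioc_subset_Icc_self

lemma gM_integral (hw : Wt w B) (k : ℕ) :
    Integrable (fun α => gM (k + 4) α * w α) ∧ (∫ α, gM (k + 4) α * w α) = Tval w k := by
  have hM : (4 : ℝ) ≤ ((k + 4 : ℕ) : ℝ) := by push_cast; linarith [Nat.cast_nonneg (α := ℝ) k]
  have i1 : Integrable ((Set.Ioc 2 3).indicator
      (fun α => (3 * (Real.log 3 * Real.log 3))⁻¹ * ((α - 2) * w α))) := by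
    refine int_Ioc (continuousOn_const.mul (ContinuousOn.mul (by fun_prop) (hw.cont.mono ?_)))
    exact fun x hx => hx.1
  have i2 : Integrable ((Set.Ioc 3 ((k + 4 : ℕ) : ℝ)).indicator (vv w)) :=
    int_Ioc ((vv_cont hw).mono fun x hx => hx.1)
  have i3 : Integrable ((Set.Ioc ((k + 4 : ℕ) : ℝ) (((k + 4 : ℕ) : ℝ) + 1)).indicator (fun α =>
      (((k + 4 : ℕ) : ℝ) * (Real.log ((k + 4 : ℕ) : ℝ) * Real.log ((k + 4 : ℕ) : ℝ)))⁻¹ *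
      ((((k + 4 : ℕ) : ℝ) + 1 - α) * w α))) := by
    refine int_Ioc (continuousOn_const.mul (ContinuousOn.mul (by fun_prop) (hw.cont.mono ?_)))
    intro x hx
    have := hx.1
    simp only [Set.mem_Ici]; linarith
  simp only [gM_split w k]
  refine ⟨i1.add (i2.add i3), ?_⟩
  have i23 := i2.add i3
  simp only [Pi.add_def] at i23
  rw [integral_add i1 i23, integral_add i2 i3, integral_indicator measurableSet_Ioc,
    integral_indicator measurableSet_Ioc, integral_indicator measurableSet_Ioc,
    ← intervalIntegral.integral_of_le (by norm_num), ← intervalIntegral.integral_of_le (by linarith),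
    ← intervalIntegral.integral_of_le (by linarith)]
  unfold Tval
  rw [intervalIntegral.integral_const_mul, intervalIntegral.integral_const_mul]
  congr 1
  · congr 1
    have := intervalIntegral.integral_comp_add_left (a := 0) (b := 1)
      (fun α => (α - 2) * w α) 2
    rw [show (2 : ℝ) + 0 = 2 by norm_num, show (2 : ℝ) + 1 = 3 by norm_num] at this
    rw [← this]
    refine intervalIntegral.integral_congr fun t _ => ?_
    ring_nf
  congr 1
  · have := intervalIntegral.smul_integral_comp_add_mul (a := 0) (b := 1)
      (vv w) ((k + 1 : ℕ) : ℝ) 3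
    rw [show (3 : ℝ) + ((k + 1 : ℕ) : ℝ) * 0 = 3 by ring,
      show (3 : ℝ) + ((k + 1 : ℕ) : ℝ) * 1 = ((k + 4 : ℕ) : ℝ) by push_cast; ring] at this
    rw [← this, smul_eq_mul]
  · congr 1
    have := intervalIntegral.integral_comp_add_left (a := 0) (b := 1)
      (fun α => (((k + 4 : ℕ) : ℝ) + 1 - α) * w α) ((k + 4 : ℕ) : ℝ)
    rw [add_zero] at this
    rw [← this]
    refine intervalIntegral.integral_congr fun t _ => ?_
    ring_nf

lemma middle_eq (w : ℝ → ℝ) (k : ℕ) :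
    ((k + 1 : ℕ) : ℝ) * (∫ t in (0 : ℝ)..1, vv w (3 + ((k + 1 : ℕ) : ℝ) * t)) =
      ∫ α in (3 : ℝ)..((k + 4 : ℕ) : ℝ), vv w α := by
  have := intervalIntegral.smul_integral_comp_add_mul (a := 0) (b := 1)
      (vv w) ((k + 1 : ℕ) : ℝ) 3
  rw [show (3 : ℝ) + ((k + 1 : ℕ) : ℝ) * 0 = 3 by ring,
      show (3 : ℝ) + ((k + 1 : ℕ) : ℝ) * 1 = ((k + 4 : ℕ) : ℝ) by push_cast; ring] at this
  rw [← this, smul_eq_mul]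

lemma vv_intervalIntegrable (hw : Wt w B) {M : ℝ} (hM : 3 ≤ M) :
    IntervalIntegrable (vv w) volume 3 M := by
  refine ContinuousOn.intervalIntegrable ((vv_cont hw).mono fun x hx => ?_)
  rw [Set.uIcc_of_le hM] at hx
  exact hx.1

lemma vv_one_le {M : ℝ} (hM : 3 ≤ M) : ∫ α in (3 : ℝ)..M, vv (fun _ => 1) α ≤ 1 := by
  have := intervalIntegral.integral_eq_sub_of_hasDerivAt (a := 3) (b := M)
    (f := fun t => - (Real.log t)⁻¹) (f' := vv fun _ => 1) (fun t ht => by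
      rw [Set.uIcc_of_le hM] at ht
      have hl := one_le_log ht.1
      have h1 := ((Real.hasDerivAt_log (x := t) (by linarith [ht.1])).inv (by linarith)).neg
      have e : vv (fun _ => 1) t = -(-(t⁻¹) / (Real.log t) ^ 2) := by
        unfold vv
        have : t ≠ 0 := by linarith [ht.1]
        have : Real.log t ≠ 0 := by linarith
        field_simp
      rw [e]
      exact h1) (vv_intervalIntegrable wt_one hM)
  rw [this]
  have h3 := inv_le_one_of_one_le₀ (one_le_log le_rfl)
  have h4 : 0 < (Real.log M)⁻¹ := inv_pos.2 (by linarith [one_le_log hM])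
  linarith

lemma vv_log_eq {M : ℝ} (hM : 3 ≤ M) :
    ∫ α in (3 : ℝ)..M, vv Real.log α = Real.log (Real.log M) - Real.log (Real.log 3) := by
  exact intervalIntegral.integral_eq_sub_of_hasDerivAt (a := 3) (b := M)
    (f := fun t => Real.log (Real.log t)) (f' := vv Real.log) (fun t ht => by
      rw [Set.uIcc_of_le hM] at ht
      have hl := one_le_log ht.1
      have h1 := (Real.hasDerivAt_log (x := t) (by linarith [ht.1])).log (by linarith)
      have e : vv Real.log t = t⁻¹ / Real.log t := by
        unfold vv
        have : t ≠ 0 := by linarith [ht.1]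
        have : Real.log t ≠ 0 := by linarith
        field_simp
      rw [e]
      exact h1) (vv_intervalIntegrable wt_log hM)

lemma Tval_one_le (k : ℕ) : Tval (fun _ => 1) k ≤ 3 := by
  have hM : (4 : ℝ) ≤ ((k + 4 : ℕ) : ℝ) := by push_cast; linarith [Nat.cast_nonneg (α := ℝ) k]
  unfold Tval
  rw [middle_eq]
  have h1 := vv_one_le (M := ((k + 4 : ℕ) : ℝ)) (by linarith)
  have hl3 := one_le_log le_rfl
  have hlM := one_le_log (x := ((k + 4 : ℕ) : ℝ)) (by linarith)
  have e1 : (3 * (Real.log 3 * Real.log 3))⁻¹ ≤ 1 := inv_le_one_of_one_le₀ (by nlinarith)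
  have e2 : (((k + 4 : ℕ) : ℝ) * (Real.log ((k + 4 : ℕ) : ℝ) * Real.log ((k + 4 : ℕ) : ℝ)))⁻¹ ≤ 1 :=
    inv_le_one_of_one_le₀ (one_le_mul_of_one_le_of_one_le (by linarith)
      (one_le_mul_of_one_le_of_one_le hlM hlM))
  have i1 : ∫ t in (0 : ℝ)..1, t * (1 : ℝ) = 1 / 2 := by simp
  have i3 : ∫ t in (0 : ℝ)..1, (1 - t) * (1 : ℝ) = 1 / 2 := by
    simp only [mul_one]
    rw [intervalIntegral.integral_sub (by simp) (by simp)]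
    simp
    norm_num
  rw [i1, i3]
  linarith

lemma Tval_log_ge (k : ℕ) :
    Real.log (Real.log ((k + 4 : ℕ) : ℝ)) - Real.log (Real.log 3) ≤ Tval Real.log k := by
  have hM : (4 : ℝ) ≤ ((k + 4 : ℕ) : ℝ) := by push_cast; linarith [Nat.cast_nonneg (α := ℝ) k]
  unfold Tval
  rw [middle_eq, vv_log_eq (by linarith)]
  have h1 := (cr_J1 wt_log).nonneg 0
  have h3 := (cr_J3 wt_log).nonneg k
  have hl3 := one_le_log le_rfl
  have hlM := one_le_log (x := ((k + 4 : ℕ) : ℝ)) (by linarith)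
  have e1 : 0 ≤ (3 * (Real.log 3 * Real.log 3))⁻¹ := by positivity
  have e2 : 0 ≤ (((k + 4 : ℕ) : ℝ) *
    (Real.log ((k + 4 : ℕ) : ℝ) * Real.log ((k + 4 : ℕ) : ℝ)))⁻¹ := by positivity
  have := mul_nonneg e1 h1
  have := mul_nonneg e2 h3
  linarith

lemma gM_zero (M : ℕ) {α : ℝ} (h : α ≤ 2) : gM M α = 0 := by
  unfold gM; rw [if_pos h]

lemma gM_nonneg (k : ℕ) (α : ℝ) : 0 ≤ gM (k + 4) α := by
  unfold gM
  split_ifs with h1 h2 h3 h4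
  · exact le_rfl
  · exact div_nonneg (by linarith) (by positivity)
  · exact div_nonneg zero_le_one (mul_nonneg (by linarith) (by positivity))
  · exact div_nonneg (by linarith) (by positivity)
  · exact le_rfl

lemma gM_setIntegral (hw : Wt w B) (k : ℕ) :
    (∫ α in Set.Ioi (0 : ℝ), gM (k + 4) α * w α) = Tval w k := by
  rw [setIntegral_eq_integral_of_forall_compl_eq_zero, (gM_integral hw k).2]
  intro x hx
  rw [gM_zero _ (by simp only [Set.mem_Ioi, not_lt] at hx; linarith), zero_mul]

lemma Kconst_eq (k : ℕ) : Kconst (k + 4) = Tval Real.log k := gM_setIntegral wt_log k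

lemma Tval_le (hw : Wt w B) {C : ℝ} (hC : ∀ α, 2 ≤ α → w α ≤ C) (k : ℕ) :
    Tval w k ≤ 3 * C := by
  have hC0 : 0 ≤ C := (hw.nn 2 le_rfl).trans (hC 2 le_rfl)
  rw [← (gM_integral hw k).2]
  have h1 := (gM_integral wt_one k)
  have : ∫ α, gM (k + 4) α * w α ≤ ∫ α, C * (gM (k + 4) α * 1) := by
    refine integral_mono (gM_integral hw k).1 (h1.1.const_mul C) fun α => ?_
    dsimp only
    rcases le_total α 2 with h | h
    · rw [gM_zero _ h]; simp
    · rw [mul_one, mul_comm C]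
      exact mul_le_mul_of_nonneg_left (hC α h) (gM_nonneg k α)
  rw [integral_const_mul, h1.2] at this
  have := mul_le_mul_of_nonneg_left (Tval_one_le k) hC0
  linarith

end Analytic
section Final

variable {w : ℝ → ℝ} {B : ℕ}

noncomputable def LN (N : ℕ) : ℝ :=
  Real.log (1 + Real.log (1 + ((N + 1 : ℕ) : ℝ) * (3 : ℝ)⁻¹) * (Real.log 3)⁻¹)

lemma LN_eq (N : ℕ) :
    LN N = Real.log (Real.log ((N + 4 : ℕ) : ℝ)) - Real.log (Real.log 3) := by
  have hM : (4 : ℝ) ≤ ((N + 4 : ℕ) : ℝ) := by push_cast; linarith [Nat.cast_nonneg (α := ℝ) N]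
  have hl3 := one_le_log le_rfl
  have hlM := one_le_log (x := ((N + 4 : ℕ) : ℝ)) (by linarith)
  unfold LN
  rw [show 1 + ((N + 1 : ℕ) : ℝ) * (3 : ℝ)⁻¹ = ((N + 4 : ℕ) : ℝ) / 3 by push_cast; ring,
    Real.log_div (x := ((N + 4 : ℕ) : ℝ)) (by linarith) (by norm_num),
    ← Real.log_div (x := Real.log ((N + 4 : ℕ) : ℝ)) (by linarith) (by linarith)]
  congr 1
  have : Real.log 3 ≠ 0 := by linarith
  field_simp
  ring

lemma LN_cr : CR LN := by
  have h3 : CR fun _ : ℕ => (3 : ℝ)⁻¹ :=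
    (CR.congr (CR.nat (Computable.const 3)) (by intro i; norm_num) : CR fun _ : ℕ => (3 : ℝ)).inv
      (c := 3) (by norm_num) (fun _ => le_rfl)
  have hl3 := one_le_log le_rfl
  refine CR.log1p (CR.mul (CR.log1p (CR.mul (CR.nat (cadd .id (.const 1))) h3))
    (cr_log3.inv (c := 1) one_pos fun _ => hl3))

lemma LN_mono {m n : ℕ} (h : m ≤ n) : LN m ≤ LN n := by
  have hl3 := one_le_log le_rfl
  have hm : (0 : ℝ) ≤ ((m + 1 : ℕ) : ℝ) := by positivity
  have hmn : ((m + 1 : ℕ) : ℝ) ≤ ((n + 1 : ℕ) : ℝ) := by exact_mod_cast Nat.add_le_add_right h 1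
  have h0 : 0 ≤ Real.log (1 + ((m + 1 : ℕ) : ℝ) * (3 : ℝ)⁻¹) := Real.log_nonneg (by
    have : 0 ≤ ((m + 1 : ℕ) : ℝ) * (3 : ℝ)⁻¹ := by positivity
    linarith)
  have h1 : Real.log (1 + ((m + 1 : ℕ) : ℝ) * (3 : ℝ)⁻¹) ≤
      Real.log (1 + ((n + 1 : ℕ) : ℝ) * (3 : ℝ)⁻¹) :=
    Real.log_le_log (by positivity) (by linarith)
  have h2 : 0 ≤ (Real.log 3)⁻¹ := by positivity
  unfold LN
  exact Real.log_le_log (by positivity)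
    (by linarith [mul_le_mul_of_nonneg_right h1 h2])

lemma LN_pos (N : ℕ) : 0 < LN N := by
  have hl3 := one_le_log le_rfl
  unfold LN
  refine Real.log_pos (lt_add_of_pos_right _ (mul_pos (Real.log_pos
    (lt_add_of_pos_right _ (by positivity))) (by positivity)))

lemma LN_tendsto : Tendsto LN atTop atTop := by
  have : LN = fun N => - Real.log (Real.log 3) + Real.log (Real.log ((N + 4 : ℕ) : ℝ)) := by
    funext N; rw [LN_eq]; ring
  rw [this]
  refine tendsto_atTop_add_const_left _ _ (Real.tendsto_log_atTop.comp
    (Real.tendsto_log_atTop.comp (tendsto_natCast_atTop_atTop.comp (tendsto_add_atTop_nat 4))))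

lemma Kconst_ge (k : ℕ) : LN k ≤ Kconst (k + 4) := by
  rw [Kconst_eq, LN_eq]; exact Tval_log_ge k

lemma Kconst_pos (k : ℕ) : 0 < Kconst (k + 4) := (LN_pos k).trans_le (Kconst_ge k)

lemma cr_Kinv : CR fun k : ℕ => (Kconst (k + 4))⁻¹ := by
  have h : CR fun k : ℕ => Kconst (k + 4) := (cr_Tval wt_log).congr fun k => (Kconst_eq k).symm
  exact h.inv (LN_pos 0) fun k => (LN_mono (Nat.zero_le k)).trans (Kconst_ge k)

variable {φ : ℕ → ℕ}

lemma cr_pow (hcomp : Computable φ) : CR fun k : ℕ => (2 : ℝ) ^ (-(φ (k + 4) : ℤ)) := by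
  refine ((CQ.nat (cpow (hcomp.comp (cadd .id (.const 4))))).inv.cr).congr fun k => ?_
  simp

lemma pow_summable (hinj : Function.Injective φ) (N : ℕ) :
    Summable (fun k : ℕ => (2 : ℝ) ^ (-(φ (k + N + 4) : ℤ))) ∧
      ∑' k : ℕ, (2 : ℝ) ^ (-(φ (k + N + 4) : ℤ)) ≤ 2 := by
  have hi : Function.Injective fun k : ℕ => φ (k + N + 4) := fun a b h => by
    have := hinj h; omega
  have e : (fun k : ℕ => (2 : ℝ) ^ (-(φ (k + N + 4) : ℤ))) =
      (fun n : ℕ => ((1 : ℝ) / 2) ^ n) ∘ fun k : ℕ => φ (k + N + 4) := by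
    funext k; simp
  have hs : Summable (fun n : ℕ => ((1 : ℝ) / 2) ^ n) := summable_geometric_two
  rw [e]
  refine ⟨hs.comp_injective hi, ?_⟩
  exact (tsum_comp_le_tsum_of_inj hs (fun n => by positivity) hi).trans tsum_geometric_two.le

noncomputable def tm (φ : ℕ → ℕ) (w : ℝ → ℝ) (k : ℕ) : ℝ :=
  (2 : ℝ) ^ (-(φ (k + 4) : ℤ)) * Tval w k * (Kconst (k + 4))⁻¹

lemma tm_cr (hcomp : Computable φ) (hw : Wt w B) : CR (tm φ w) :=
  ((cr_pow hcomp).mul (cr_Tval hw)).mul cr_Kinv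

lemma tm_le (hcomp : Computable φ) (hw : Wt w B) {C : ℕ} (hC : ∀ α, 2 ≤ α → w α ≤ C)
    {N k : ℕ} (h : N ≤ k) :
    tm φ w k ≤ (2 : ℝ) ^ (-(φ (k + 4) : ℤ)) * (3 * C * (LN N)⁻¹) := by
  unfold tm
  rw [mul_assoc]
  refine mul_le_mul_of_nonneg_left ?_ (by positivity)
  refine mul_le_mul (Tval_le hw hC k) ?_ (inv_nonneg.2 (Kconst_pos k).le) (by positivity)
  exact inv_anti₀ (LN_pos N) ((LN_mono h).trans (Kconst_ge k))

lemma tm_summable (hinj : Function.Injective φ) (hcomp : Computable φ) (hw : Wt w B) {C : ℕ}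
    (hC : ∀ α, 2 ≤ α → w α ≤ C) : Summable (tm φ w) :=
  Summable.of_nonneg_of_le (tm_cr hcomp hw).nonneg (fun k => tm_le hcomp hw hC (Nat.zero_le k))
    ((pow_summable hinj 0).1.mul_right _)

lemma S_cr {ι : Type} [Primcodable ι] (hinj : Function.Injective φ) (hcomp : Computable φ)
    (hw : Wt w B) {C : ℕ} (hC : ∀ α, 2 ≤ α → w α ≤ C) :
    CR fun _ : ι => ∑' k, tm φ w k := by
  have hs := tm_summable hinj hcomp hw hC
  have hcr := tm_cr hcomp hw
  have hF : CR fun x : ι × ℕ => ∑ k ∈ Finset.range x.2, tm φ w k :=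
    CR.sum (f := fun x : (ι × ℕ) × ℕ => tm φ w x.2) (hcr.comp .snd) .snd
  have hE : CR fun x : ι × ℕ => ((6 * C : ℕ) : ℝ) * (LN x.2)⁻¹ :=
    (CR.nat (.const (6 * C))).mul
      ((LN_cr.comp .snd).inv (LN_pos 0) fun x => LN_mono (Nat.zero_le _))
  refine CR.lim hF hE (fun _ => tsum_nonneg hcr.nonneg) (fun i N => ?_) fun i => ?_
  · rw [← hs.sum_add_tsum_nat_add N, add_sub_cancel_left,
      abs_of_nonneg (tsum_nonneg fun k => hcr.nonneg _)]
    obtain ⟨h1, h2⟩ := pow_summable hinj N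
    have := ((summable_nat_add_iff N).2 hs).tsum_le_tsum
      (fun k => tm_le hcomp hw hC (Nat.le_add_left N k)) (h1.mul_right (3 * C * (LN N)⁻¹))
    rw [tsum_mul_right] at this
    have hp : 0 ≤ 3 * (C : ℝ) * (LN N)⁻¹ := mul_nonneg (by positivity) (inv_nonneg.2 (LN_pos N).le)
    have h3 := mul_le_mul_of_nonneg_right h2 hp
    push_cast
    linarith
  · have := (tendsto_inv_atTop_zero.comp LN_tendsto).const_mul (((6 * C : ℕ) : ℝ))
    rw [mul_zero] at this
    exact this

lemma swap (hinj : Function.Injective φ) (hcomp : Computable φ) (hw : Wt w B) {C : ℕ}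
    (hC : ∀ α, 2 ≤ α → w α ≤ C) {gstar : ℝ → ℝ}
    (hgstar : ∀ α, gstar α =
      ∑' k : ℕ, (2 : ℝ) ^ (-(φ (k + 4) : ℤ)) * gM (k + 4) α / Kconst (k + 4)) :
    (∫ α in Set.Ioi (0 : ℝ), gstar α * w α) = ∑' k, tm φ w k := by
  let F : ℕ → ℝ → ℝ := fun k α =>
    ((2 : ℝ) ^ (-(φ (k + 4) : ℤ)) * (Kconst (k + 4))⁻¹) * (gM (k + 4) α * w α)
  have hI : ∀ k, ∫ α in Set.Ioi (0 : ℝ), F k α = tm φ w k := fun k => by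
    simp only [F]
    rw [integral_const_mul, gM_setIntegral hw k]
    unfold tm; ring
  have hintg : ∀ k, Integrable (F k) (volume.restrict (Set.Ioi (0 : ℝ))) := fun k =>
    ((gM_integral hw k).1.const_mul _).integrableOn
  have hnn : ∀ k α, 0 ≤ F k α := fun k α => by
    refine mul_nonneg (mul_nonneg (by positivity) (inv_nonneg.2 (Kconst_pos k).le)) ?_
    rcases le_total α 2 with h | h
    · rw [gM_zero _ h]; simp
    · exact mul_nonneg (gM_nonneg k α) (hw.nn α h)
  have := integral_tsum_of_summable_integral_norm hintg (by
    simp only [Real.norm_eq_abs, abs_of_nonneg (hnn _ _), hI]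
    exact tm_summable hinj hcomp hw hC)
  simp only [hI] at this
  rw [this]
  refine integral_congr_ae (Eventually.of_forall fun α => ?_)
  simp only [F]
  rw [hgstar, ← tsum_mul_right]
  refine tsum_congr fun k => ?_
  rw [div_eq_mul_inv]; ring

end Final

theorem stmt19 (φ : ℕ → ℕ) (hinj : Function.Injective φ) (hcomp : Computable φ)
    (gstar : ℝ → ℝ)
    (hgstar : ∀ α, gstar α =
      ∑' k : ℕ, (2 : ℝ) ^ (-(φ (k + 4) : ℤ)) * gM (k + 4) α / Kconst (k + 4))
    (c₂ : ℝ) (hc₂ : c₂ = ∫ α in Set.Ioi (0 : ℝ), gstar α)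
    (fstar : ℝ → ℝ) (hfstar : ∀ α, fstar α = gstar |α| / (2 * c₂))
    (P σsq : ℝ) (hP : 0 < P) (hσ : 0 < σsq)
    (hPc : IsComputableReal P) (hσc : IsComputableReal σsq) :
    IsComputableReal (∫ α, Real.logb 2 (1 + σsq / (P * α ^ 2)) * fstar α) := by
  have hs0 : 0 ≤ σsq * P⁻¹ := by positivity
  have hsc : ∀ {ι : Type} [Primcodable ι], CR fun _ : ι => σsq * P⁻¹ := fun {ι} _ =>
    (hσc.cr hσ.le).mul ((hPc.cr hP.le).inv hP fun _ => le_rfl)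
  obtain ⟨B, hB⟩ := exists_nat_ge (σsq * P⁻¹)
  have hw := wt_main hs0 hsc hB
  have hC : ∀ α : ℝ, 2 ≤ α → Real.log (1 + σsq * P⁻¹ / α ^ 2) ≤ (B : ℝ) := fun α hα => by
    have h1 : σsq * P⁻¹ / α ^ 2 ≤ σsq * P⁻¹ := div_le_self hs0 (by nlinarith)
    have h2 : 0 ≤ σsq * P⁻¹ / α ^ 2 := by positivity
    have := Real.log_le_sub_one_of_pos (x := 1 + σsq * P⁻¹ / α ^ 2) (by linarith)
    linarith
  have hS := swap hinj hcomp hw hC hgstar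
  have hc : c₂ = ∑' k, tm φ (fun _ => 1) k := by
    rw [hc₂, ← swap hinj hcomp wt_one (C := 1) (fun _ _ => by simp) hgstar]
    simp
  have hccr : CR fun _ : ℕ => c₂ := by
    rw [hc]
    exact S_cr hinj hcomp wt_one (C := 1) (fun _ _ => by simp)
  have hScr := S_cr (ι := ℕ) hinj hcomp hw hC
  have hl2 : CR fun _ : ℕ => Real.log 2 :=
    (CR.log1p (CR.nat (Computable.const 1))).congr fun _ => by norm_num
  have key : (∫ α, Real.logb 2 (1 + σsq / (P * α ^ 2)) * fstar α) =
      (∑' k, tm φ (fun α => Real.log (1 + σsq * P⁻¹ / α ^ 2)) k) * (Real.log 2)⁻¹ * c₂⁻¹ := by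
    rw [← hS]
    have := integral_comp_abs (f := fun α => Real.logb 2 (1 + σsq / (P * α ^ 2)) *
      (gstar α / (2 * c₂)))
    simp only [sq_abs] at this
    simp only [hfstar]
    rw [this, ← integral_const_mul, ← integral_mul_const, ← integral_mul_const]
    refine integral_congr_ae (Eventually.of_forall fun α => ?_)
    simp only [Real.logb]
    rw [show σsq / (P * α ^ 2) = σsq * P⁻¹ / α ^ 2 by
      rw [div_eq_mul_inv, mul_inv, div_eq_mul_inv, mul_assoc]]
    rw [div_eq_mul_inv, div_eq_mul_inv (gstar α), mul_inv]
    ring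
  rw [key]
  refine CR.isComputableReal ?_
  have hl2p : 0 < Real.log 2 := Real.log_pos (by norm_num)
  have h1 := hScr.mul (hl2.inv hl2p fun _ => le_rfl)
  rcases (hccr.nonneg 0).eq_or_lt with h0 | h0
  · exact (CR.nat (ι := ℕ) (Computable.const 0)).congr fun _ => by rw [← h0]; simp
  · exact h1.mul (hccr.inv h0 fun _ => le_rfl)
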